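/- arXiv:2304.06127 — 7 statements merged into one kernel-verified Lean document; each statement's English description precedes it below -/
import Mathlib

section
/- All derivatives of y_n at τ = 0 up to order 2n−1 vanish, and the derivative of order 2n satisfies y_n^{(2n)}(0) = −∏_{j=2}^n α_j. That is, iteratedDeriv k y_n 0 = 0 for every 0 ≤ k ≤ 2n−1, and iteratedDeriv (2n) y_n 0 = −∏_{j=2}^n α_j. -/
/-!
The equation of motion of mass `j ≥ 2` gives, after `k` differentiations at the initial time,
`y_j^{(k+2)} = α_j (y_{j-1}^{(k)} - y_j^{(k)}) + β_j (y_{j+1}^{(k)} - y_j^{(k)})`.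
As each `y_i` vanishes to order `2 i`, for `k ≤ 2 (j - 1)` every term on the right except
`α_j y_{j-1}^{(k)}` is zero. So the load, which first shows in `y_1''`, is passed down
the chain by one mass every two derivatives, picking up the factor `α_j` at mass `j`.
-/

section SpringChain

open scoped Topology

variable {𝕜 E : Type*} [NontriviallyNormedField 𝕜] [NormedAddCommGroup E] [NormedSpace 𝕜 E]

theorem iteratedDeriv_add_two_of_spring_law {a b : 𝕜} {p q u : 𝕜 → E} {t₀ : 𝕜} {k : ℕ}
    (hu : ContDiffAt 𝕜 k u t₀) (hp : ContDiffAt 𝕜 k p t₀) (hq : ContDiffAt 𝕜 k q t₀)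
    (law : ∀ᶠ t in 𝓝 t₀, deriv (deriv u) t = a • (p t - u t) + b • (q t - u t)) :
    iteratedDeriv (k + 2) u t₀ =
      a • (iteratedDeriv k p t₀ - iteratedDeriv k u t₀) +
        b • (iteratedDeriv k q t₀ - iteratedDeriv k u t₀) := by
  rw [iteratedDeriv_succ', iteratedDeriv_succ', Filter.EventuallyEq.iteratedDeriv_eq k law,
    iteratedDeriv_fun_add ((hp.sub hu).const_smul a) ((hq.sub hu).const_smul b),
    iteratedDeriv_fun_const_smul_field, iteratedDeriv_fun_const_smul_field,
    iteratedDeriv_fun_sub hp hu, iteratedDeriv_fun_sub hq hu]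

/-- The motions `y 1, …, y n` of a chain of `n` masses joined by springs, near the time `t₀`:
`α j` and `β j` are the stiffness-to-mass ratios at mass `j` of the springs above and below it, the
top mass carries the load `f`, and the bottom mass hangs freely. The entries of `y`, `α` and `β`
outside these ranges are unconstrained. -/
structure IsSpringChainAt (n : ℕ) (α β : ℕ → 𝕜) (f : E) (y : ℕ → 𝕜 → E) (t₀ : 𝕜) : Prop where
  contDiffAt : ∀ j, 1 ≤ j → j ≤ n → ContDiffAt 𝕜 (2 * n : ℕ) (y j) t₀
  top : ∀ᶠ t in 𝓝 t₀, deriv (deriv (y 1)) t = (y 2 t - y 1 t) + f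
  interior : ∀ j, 2 ≤ j → j < n → ∀ᶠ t in 𝓝 t₀,
    deriv (deriv (y j)) t = α j • (y (j - 1) t - y j t) + β j • (y (j + 1) t - y j t)
  bottom : ∀ᶠ t in 𝓝 t₀, deriv (deriv (y n)) t = α n • (y (n - 1) t - y n t)

namespace IsSpringChainAt

variable {n : ℕ} {α β : ℕ → 𝕜} {f : E} {y : ℕ → 𝕜 → E} {t₀ : 𝕜}

theorem iteratedDeriv_add_two (h : IsSpringChainAt n α β f y t₀) {j k : ℕ} (hj : 2 ≤ j)
    (hjn : j ≤ n) (hk : k ≤ 2 * n) (hself : iteratedDeriv k (y j) t₀ = 0)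
    (hbelow : j < n → iteratedDeriv k (y (j + 1)) t₀ = 0) :
    iteratedDeriv (k + 2) (y j) t₀ = α j • iteratedDeriv k (y (j - 1)) t₀ := by
  have smooth : ∀ i, 1 ≤ i → i ≤ n → ContDiffAt 𝕜 k (y i) t₀ := fun i hi hin =>
    (h.contDiffAt i hi hin).of_le (by exact_mod_cast hk)
  have hu := smooth j (by lia) hjn
  have hp := smooth (j - 1) (by lia) (by lia)
  rcases hjn.lt_or_eq with hlt | rfl
  · rw [iteratedDeriv_add_two_of_spring_law hu hp (smooth (j + 1) (by lia) hlt)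
      (h.interior j hj hlt), hself, hbelow hlt, sub_zero, sub_zero, smul_zero, add_zero]
  · -- A free end is a spring attached to a copy of the mass itself.
    have law : ∀ᶠ t in 𝓝 t₀, deriv (deriv (y j)) t =
        α j • (y (j - 1) t - y j t) + (0 : 𝕜) • (y j t - y j t) := by
      simpa only [zero_smul, add_zero] using h.bottom
    rw [iteratedDeriv_add_two_of_spring_law hu hp hu law, hself, sub_zero, zero_smul, add_zero]

theorem iteratedDeriv_eq_zero (h : IsSpringChainAt n α β f y t₀)
    (hpos : ∀ j, 1 ≤ j → j ≤ n → y j t₀ = 0) (hvel : ∀ j, 1 ≤ j → j ≤ n → deriv (y j) t₀ = 0)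
    {j k : ℕ} (hj : 1 ≤ j) (hjn : j ≤ n) (hk : k < 2 * j) :
    iteratedDeriv k (y j) t₀ = 0 := by
  induction k using Nat.twoStepInduction generalizing j with
  | zero => rw [iteratedDeriv_zero, hpos j hj hjn]
  | one => rw [iteratedDeriv_one, hvel j hj hjn]
  | more k ih _ =>
    rw [h.iteratedDeriv_add_two (by lia) hjn (by lia) (ih hj hjn (by lia))
        (fun hlt => ih (by lia) hlt (by lia)),
      ih (by lia) (by lia) (by lia), smul_zero]

theorem iteratedDeriv_two_top (h : IsSpringChainAt n α β f y t₀)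
    (h₁ : y 1 t₀ = 0) (h₂ : y 2 t₀ = 0) : iteratedDeriv 2 (y 1) t₀ = f := by
  rw [iteratedDeriv_succ', iteratedDeriv_one, h.top.self_of_nhds, h₁, h₂, sub_zero, zero_add]

theorem iteratedDeriv_two_mul (h : IsSpringChainAt n α β f y t₀) (hn : 2 ≤ n)
    (hpos : ∀ j, 1 ≤ j → j ≤ n → y j t₀ = 0) (hvel : ∀ j, 1 ≤ j → j ≤ n → deriv (y j) t₀ = 0)
    {j : ℕ} (hj : 1 ≤ j) (hjn : j ≤ n) :
    iteratedDeriv (2 * j) (y j) t₀ = (∏ i ∈ Finset.Icc 2 j, α i) • f := by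
  induction j, hj using Nat.le_induction with
  | base =>
    simpa using h.iteratedDeriv_two_top (hpos 1 le_rfl (by lia)) (hpos 2 one_le_two hn)
  | succ j hj ih =>
    have passed_down : iteratedDeriv (2 * j + 2) (y (j + 1)) t₀ =
        α (j + 1) • iteratedDeriv (2 * j) (y j) t₀ :=
      h.iteratedDeriv_add_two (by lia) hjn (by lia)
        (h.iteratedDeriv_eq_zero hpos hvel (by lia) hjn (by lia))
        (fun hlt => h.iteratedDeriv_eq_zero hpos hvel (by lia) hlt (by lia))
    rw [mul_add_one, passed_down, ih (by lia), smul_smul, mul_comm,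
      Finset.prod_Icc_succ_top (by lia)]

end IsSpringChainAt

theorem bottom_mass_initial_derivatives_general {n : ℕ} (hn : 2 ≤ n) {α β : ℕ → 𝕜} {f : E}
    {y : ℕ → 𝕜 → E} {t₀ : 𝕜} (h : IsSpringChainAt n α β f y t₀)
    (hpos : ∀ j, 1 ≤ j → j ≤ n → y j t₀ = 0) (hvel : ∀ j, 1 ≤ j → j ≤ n → deriv (y j) t₀ = 0) :
    (∀ k ≤ 2 * n - 1, iteratedDeriv k (y n) t₀ = 0) ∧
      iteratedDeriv (2 * n) (y n) t₀ = (∏ j ∈ Finset.Icc 2 n, α j) • f :=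
  ⟨fun _ hk => h.iteratedDeriv_eq_zero hpos hvel (by lia) le_rfl (by lia),
    h.iteratedDeriv_two_mul hn hpos hvel (by lia) le_rfl⟩

end SpringChain

/-- for the released non-dimensional mass–spring system, all derivatives of
`y n` at `τ = 0` up to order `2n - 1` vanish, and the derivative of order `2n` equals
`-∏_{j=2}^n α j`. -/
theorem bottom_mass_initial_derivatives
    (n : ℕ) (hn : 2 ≤ n) (α β : ℕ → ℝ)
    (hα : ∀ j, 2 ≤ j → j ≤ n → 0 < α j)
    (hβ : ∀ j, 2 ≤ j → j ≤ n - 1 → 0 < β j)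
    (y : ℕ → ℝ → ℝ)
    (hsmooth : ∀ j, 1 ≤ j → j ≤ n → ContDiff ℝ (⊤ : ℕ∞) (y j))
    (heq1 : ∀ t : ℝ, deriv (deriv (y 1)) t = (y 2 t - y 1 t) - 1)
    (heqj : ∀ j, 2 ≤ j → j ≤ n - 1 → ∀ t : ℝ,
      deriv (deriv (y j)) t = α j * (y (j - 1) t - y j t) + β j * (y (j + 1) t - y j t))
    (heqn : ∀ t : ℝ, deriv (deriv (y n)) t = α n * (y (n - 1) t - y n t))
    (hy0 : ∀ j, 1 ≤ j → j ≤ n → y j 0 = 0)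
    (hy0' : ∀ j, 1 ≤ j → j ≤ n → deriv (y j) 0 = 0) :
    (∀ k ≤ 2 * n - 1, iteratedDeriv k (y n) 0 = 0) ∧
      iteratedDeriv (2 * n) (y n) 0 = -∏ j ∈ Finset.Icc 2 n, α j := by
  have h : IsSpringChainAt n α β (-1) y 0 :=
    { contDiffAt := fun j hj hjn => (contDiff_infty.mp (hsmooth j hj hjn) (2 * n)).contDiffAt
      top := .of_forall heq1
      interior := fun j hj hjn => .of_forall (heqj j hj (by lia))
      bottom := .of_forall heqn }
  simpa only [smul_eq_mul, mul_neg_one] using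
    bottom_mass_initial_derivatives_general hn h hy0 hy0'
end

section
/- As τ → 0, the bottom mass position satisfies y_n(τ) ∼ −(∏_{j=2}^n α_j) τ^{2n}/(2n)!; precisely, y_n(τ) + (∏_{j=2}^n α_j) τ^{2n}/(2n)! = o(τ^{2n}) as τ → 0. -/
/-!
Motion travels down the chain at the cost of two integrations per spring. The top mass starts with
acceleration `-1`, and the acceleration of mass `j` is `α j * y (j - 1)` plus a combination of the
displacements of the masses `j, …, n`. A first induction shows that the latter are negligible: mass
`j` is still at rest to order `2 * (j - 1)`. Hence `y j` is to leading order the double integral of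
`α j * y (j - 1)`, and each step multiplies the leading Taylor coefficient by `α j` and raises the
order by two.
-/

open Asymptotics Filter Finset Topology
open scoped Nat

section Expansion

variable {E : Type*} [NormedAddCommGroup E] [NormedSpace ℝ E]
  {f g f' y v a : ℝ → E} {c : E} {k : ℕ} {s : Set ℝ} {t₀ : ℝ}

/-- `f t = (t - t₀) ^ k / k! • c + o((t - t₀) ^ k)` as `t → t₀` within `s`. The coefficient `c` may
vanish, in which case this says that `f` is negligible to order `k`; see
`hasLeadingTaylorTerm_zero_left`. -/
def HasLeadingTaylorTerm (f : ℝ → E) (c : E) (k : ℕ) (s : Set ℝ) (t₀ : ℝ) : Prop :=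
  (fun t ↦ f t - ((t - t₀) ^ k / k !) • c) =o[𝓝[s] t₀] fun t ↦ (t - t₀) ^ k

lemma hasLeadingTaylorTerm_zero_left :
    HasLeadingTaylorTerm f 0 k s t₀ ↔ f =o[𝓝[s] t₀] fun t ↦ (t - t₀) ^ k := by
  simp only [HasLeadingTaylorTerm, smul_zero, sub_zero]

lemma hasLeadingTaylorTerm_order_zero :
    HasLeadingTaylorTerm f c 0 s t₀ ↔ Tendsto f (𝓝[s] t₀) (𝓝 c) := by
  simp only [HasLeadingTaylorTerm, pow_zero, Nat.factorial_zero, Nat.cast_one, div_one, one_smul,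
    isLittleO_one_iff, tendsto_sub_nhds_zero_iff]

lemma HasLeadingTaylorTerm.const_smul (hf : HasLeadingTaylorTerm f c k s t₀) (r : ℝ) :
    HasLeadingTaylorTerm (fun t ↦ r • f t) (r • c) k s t₀ :=
  (IsLittleO.const_smul_left hf r).congr_left fun t ↦ by
    simp only [Pi.smul_apply, smul_sub, smul_comm r]

lemma HasLeadingTaylorTerm.of_sub_isLittleO (hg : HasLeadingTaylorTerm g c k s t₀)
    (hfg : (fun t ↦ f t - g t) =o[𝓝[s] t₀] fun t ↦ (t - t₀) ^ k) :
    HasLeadingTaylorTerm f c k s t₀ :=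
  (hfg.add hg).congr_left fun _ ↦ sub_add_sub_cancel _ _ _

lemma hasDerivAt_sub_pow_succ_div_factorial (t₀ : ℝ) (k : ℕ) (t : ℝ) :
    HasDerivAt (fun t ↦ (t - t₀) ^ (k + 1) / (k + 1)!) ((t - t₀) ^ k / k !) t := by
  refine ((((hasDerivAt_id t).sub_const t₀).pow (k + 1)).div_const _).congr_deriv ?_
  simp only [id, Nat.factorial_succ, Nat.cast_mul, add_tsub_cancel_right, mul_one]
  field_simp

lemma HasLeadingTaylorTerm.of_hasDerivWithinAt (hf' : HasLeadingTaylorTerm f' c k s t₀)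
    (hs : Convex ℝ s) (ht₀ : t₀ ∈ s) (hf : ∀ t ∈ s, HasDerivWithinAt f (f' t) s t)
    (hf₀ : f t₀ = 0) : HasLeadingTaylorTerm f c (k + 1) s t₀ := by
  have hderiv : ∀ t ∈ s, HasDerivWithinAt (fun t ↦ f t - ((t - t₀) ^ (k + 1) / (k + 1)!) • c)
      (f' t - ((t - t₀) ^ k / k !) • c) s t := fun t ht ↦
    (hf t ht).sub
      ((hasDerivAt_sub_pow_succ_div_factorial t₀ k t).hasDerivWithinAt.smul_const c)
  refine (hs.isLittleO_pow_succ_real ht₀ hderiv hf').congr_left fun t ↦ ?_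
  simp [hf₀]

/-- The motion of a single mass: position `y`, velocity `v` and acceleration `a` during `s`, with
zero position and velocity at the time `t₀` of release. Derivatives are taken within `s`, so that
`s` may be a one-sided interval starting at `t₀`. -/
structure StartsAtRest (y v a : ℝ → E) (s : Set ℝ) (t₀ : ℝ) : Prop where
  hasDerivWithinAt_position : ∀ t ∈ s, HasDerivWithinAt y (v t) s t
  hasDerivWithinAt_velocity : ∀ t ∈ s, HasDerivWithinAt v (a t) s t
  position_eq_zero : y t₀ = 0
  velocity_eq_zero : v t₀ = 0

lemma StartsAtRest.hasLeadingTaylorTerm (h : StartsAtRest y v a s t₀) (hs : Convex ℝ s)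
    (ht₀ : t₀ ∈ s) (ha : HasLeadingTaylorTerm a c k s t₀) :
    HasLeadingTaylorTerm y c (k + 2) s t₀ :=
  (ha.of_hasDerivWithinAt hs ht₀ h.hasDerivWithinAt_velocity h.velocity_eq_zero).of_hasDerivWithinAt
    hs ht₀ h.hasDerivWithinAt_position h.position_eq_zero

lemma StartsAtRest.tendsto_position (h : StartsAtRest y v a s t₀) (ht₀ : t₀ ∈ s) :
    Tendsto y (𝓝[s] t₀) (𝓝 0) :=
  h.position_eq_zero ▸ (h.hasDerivWithinAt_position t₀ ht₀).continuousWithinAt.tendsto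

lemma StartsAtRest.of_contDiff (hy : ContDiff ℝ 2 y) (hy₀ : y t₀ = 0) (hy₀' : deriv y t₀ = 0) :
    StartsAtRest y (deriv y) (deriv (deriv y)) s t₀ where
  hasDerivWithinAt_position t _ := (hy.differentiable two_ne_zero t).hasDerivAt.hasDerivWithinAt
  hasDerivWithinAt_velocity t _ :=
    (hy.differentiable_deriv_two t).hasDerivAt.hasDerivWithinAt
  position_eq_zero := hy₀
  velocity_eq_zero := hy₀'

end Expansion

lemma isBigO_sum_norm {ι X F : Type*} [SeminormedAddCommGroup F] {S : Finset ι} {i : ι}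
    (hi : i ∈ S) (f : ι → X → F) (l : Filter X) : f i =O[l] fun x ↦ ∑ j ∈ S, ‖f j x‖ :=
  .of_norm_le fun x ↦ single_le_sum (f := fun j ↦ ‖f j x‖) (fun _ _ ↦ norm_nonneg _) hi

section Chain

variable {E : Type*} [NormedAddCommGroup E] [NormedSpace ℝ E]
  {n : ℕ} {α : ℕ → ℝ} {y v a : ℕ → ℝ → E} {s : Set ℝ} {t₀ : ℝ}

/-- Up to a linearly bounded function of the displacements of the masses `j + 1, …, n`, the mass
`j + 1` is driven by `α (j + 1) • y j` alone. This is all that the leading order of the motion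
depends on, and it allows nonlinear springs. -/
def IsDrivenFromAbove (n : ℕ) (α : ℕ → ℝ) (y a : ℕ → ℝ → E) (s : Set ℝ) (t₀ : ℝ) : Prop :=
  ∀ j, 1 ≤ j → j < n → (fun t ↦ a (j + 1) t - α (j + 1) • y j t)
    =O[𝓝[s] t₀] fun t ↦ ∑ i ∈ Icc (j + 1) n, ‖y i t‖

lemma IsDrivenFromAbove.isLittleO (h : IsDrivenFromAbove n α y a s t₀) {j : ℕ} (hj : 1 ≤ j)
    (hjn : j < n) {u : ℝ → ℝ} (hy : ∀ i, j < i → i ≤ n → y i =o[𝓝[s] t₀] u) :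
    (fun t ↦ a (j + 1) t - α (j + 1) • y j t) =o[𝓝[s] t₀] u :=
  (h j hj hjn).trans_isLittleO <| IsLittleO.fun_sum fun i hi ↦
    (hy i (mem_Icc.mp hi).1 (mem_Icc.mp hi).2).norm_left

variable (hs : Convex ℝ s) (ht₀ : t₀ ∈ s)
  (hrest : ∀ j, 1 ≤ j → j ≤ n → StartsAtRest (y j) (v j) (a j) s t₀)
  (hdriven : IsDrivenFromAbove n α y a s t₀)

include hs ht₀ hrest hdriven

lemma position_isLittleO_of_isDrivenFromAbove {k j : ℕ} (hkj : k < j) (hjn : j ≤ n) :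
    y j =o[𝓝[s] t₀] fun t ↦ (t - t₀) ^ (2 * k) := by
  induction k generalizing j with
  | zero =>
    simpa only [mul_zero, pow_zero, isLittleO_one_iff]
      using (hrest j hkj hjn).tendsto_position ht₀
  | succ k ih =>
    obtain ⟨j, rfl⟩ : ∃ i, j = i + 1 := ⟨j - 1, by lia⟩
    have hdrive : (fun t ↦ α (j + 1) • y j t) =o[𝓝[s] t₀] fun t ↦ (t - t₀) ^ (2 * k) :=
      (ih (by lia) (by lia)).const_smul_left _
    have herror := hdriven.isLittleO (j := j) (by lia) hjn
      fun i hji hin ↦ ih (j := i) (by lia) hin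
    have haccel : HasLeadingTaylorTerm (a (j + 1)) 0 (2 * k) s t₀ :=
      (hasLeadingTaylorTerm_zero_left.mpr hdrive).of_sub_isLittleO herror
    exact hasLeadingTaylorTerm_zero_left.mp
      ((hrest (j + 1) (by lia) hjn).hasLeadingTaylorTerm hs ht₀ haccel)

theorem hasLeadingTaylorTerm_position_of_isDrivenFromAbove {c : E}
    (hc : Tendsto (a 1) (𝓝[s] t₀) (𝓝 c)) {j : ℕ} (hj : 1 ≤ j) (hjn : j ≤ n) :
    HasLeadingTaylorTerm (y j) ((∏ i ∈ Icc 2 j, α i) • c) (2 * j) s t₀ := by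
  induction j, hj using Nat.le_induction with
  | base =>
    simpa using (hrest 1 le_rfl hjn).hasLeadingTaylorTerm hs ht₀
      (hasLeadingTaylorTerm_order_zero.mpr hc)
  | succ j hj ih =>
    have hdrive := (ih (by lia)).const_smul (α (j + 1))
    have herror := hdriven.isLittleO hj hjn fun i hji hin ↦
      position_isLittleO_of_isDrivenFromAbove hs ht₀ hrest hdriven hji hin
    rw [prod_Icc_succ_top (by lia), mul_comm, mul_smul]
    exact (hrest (j + 1) (by lia) hjn).hasLeadingTaylorTerm hs ht₀
      (hdrive.of_sub_isLittleO herror)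

end Chain

section MassSpring

variable {E : Type*} [NormedAddCommGroup E] [NormedSpace ℝ E]
  {n : ℕ} {α β : ℕ → ℝ} {y v a : ℕ → ℝ → E} {s : Set ℝ} {t₀ : ℝ}

lemma isDrivenFromAbove_of_massSpring
    (haj : ∀ j, 2 ≤ j → j ≤ n - 1 → ∀ t ∈ s,
      a j t = α j • (y (j - 1) t - y j t) + β j • (y (j + 1) t - y j t))
    (han : ∀ t ∈ s, a n t = α n • (y (n - 1) t - y n t)) :
    IsDrivenFromAbove n α y a s t₀ := by
  intro j hj hjn
  have hself := isBigO_sum_norm (left_mem_Icc.mpr hjn) y (𝓝[s] t₀)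
  obtain hlt | rfl : j + 1 < n ∨ j + 1 = n := by lia
  · have hnext := isBigO_sum_norm (mem_Icc.mpr ⟨by lia, hlt⟩ : j + 2 ∈ Icc (j + 1) n) y (𝓝[s] t₀)
    refine (((hnext.sub hself).const_smul_left (β (j + 1))).sub
      (hself.const_smul_left (α (j + 1)))).congr' ?_ .rfl
    filter_upwards [self_mem_nhdsWithin] with t ht
    rw [haj (j + 1) (by lia) (by lia) t ht]
    simp only [Pi.smul_apply, add_tsub_cancel_right]
    module
  · refine (hself.const_smul_left (-α (j + 1))).congr' ?_ .rfl
    filter_upwards [self_mem_nhdsWithin] with t ht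
    rw [han t ht]
    simp only [Pi.smul_apply, add_tsub_cancel_right]
    module

theorem bottom_mass_short_time_asymptotics_general (hs : Convex ℝ s) (ht₀ : t₀ ∈ s) (hn : 2 ≤ n)
    (g : E) (hrest : ∀ j, 1 ≤ j → j ≤ n → StartsAtRest (y j) (v j) (a j) s t₀)
    (ha1 : ∀ t ∈ s, a 1 t = (y 2 t - y 1 t) - g)
    (haj : ∀ j, 2 ≤ j → j ≤ n - 1 → ∀ t ∈ s,
      a j t = α j • (y (j - 1) t - y j t) + β j • (y (j + 1) t - y j t))
    (han : ∀ t ∈ s, a n t = α n • (y (n - 1) t - y n t)) :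
    (fun τ ↦ y n τ + ((∏ j ∈ Icc 2 n, α j) * (τ - t₀) ^ (2 * n) / (2 * n)!) • g)
      =o[𝓝[s] t₀] fun τ ↦ (τ - t₀) ^ (2 * n) := by
  have htop : Tendsto (a 1) (𝓝[s] t₀) (𝓝 (-g)) := by
    have hlim := (((hrest 2 (by lia) hn).tendsto_position ht₀).sub
      ((hrest 1 le_rfl (by lia)).tendsto_position ht₀)).sub_const g
    rw [sub_zero, zero_sub] at hlim
    exact hlim.congr' (eventually_nhdsWithin_of_forall fun t ht ↦ (ha1 t ht).symm)
  have hbottom := hasLeadingTaylorTerm_position_of_isDrivenFromAbove hs ht₀ hrest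
    (isDrivenFromAbove_of_massSpring haj han) htop (by lia) le_rfl
  refine IsLittleO.congr_left hbottom fun τ ↦ ?_
  module

end MassSpring

/-- short-time asymptotics of the bottom mass:
`y n τ + (∏ α) τ^(2n)/(2n)! = o(τ^(2n))` as `τ → 0`. -/
theorem bottom_mass_short_time_asymptotics
    (n : ℕ) (hn : 2 ≤ n) (α β : ℕ → ℝ)
    (hα : ∀ j, 2 ≤ j → j ≤ n → 0 < α j)
    (hβ : ∀ j, 2 ≤ j → j ≤ n - 1 → 0 < β j)
    (y : ℕ → ℝ → ℝ)
    (hsmooth : ∀ j, 1 ≤ j → j ≤ n → ContDiff ℝ (⊤ : ℕ∞) (y j))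
    (heq1 : ∀ t : ℝ, deriv (deriv (y 1)) t = (y 2 t - y 1 t) - 1)
    (heqj : ∀ j, 2 ≤ j → j ≤ n - 1 → ∀ t : ℝ,
      deriv (deriv (y j)) t = α j * (y (j - 1) t - y j t) + β j * (y (j + 1) t - y j t))
    (heqn : ∀ t : ℝ, deriv (deriv (y n)) t = α n * (y (n - 1) t - y n t))
    (hy0 : ∀ j, 1 ≤ j → j ≤ n → y j 0 = 0)
    (hy0' : ∀ j, 1 ≤ j → j ≤ n → deriv (y j) 0 = 0) :
    (fun τ : ℝ => y n τ + (∏ j ∈ Finset.Icc 2 n, α j) * τ ^ (2 * n) / (Nat.factorial (2 * n)))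
      =o[nhds (0 : ℝ)] fun τ : ℝ => τ ^ (2 * n) := by
  simpa using bottom_mass_short_time_asymptotics_general convex_univ (Set.mem_univ 0) hn (1 : ℝ)
    (fun j hj hjn ↦ .of_contDiff (contDiff_infty.mp (hsmooth j hj hjn) 2) (hy0 j hj hjn)
      (hy0' j hj hjn))
    (fun t _ ↦ heq1 t) (fun j hj hjn t _ ↦ heqj j hj hjn t) (fun t _ ↦ heqn t)
end

section
/- For every index 1 ≤ j ≤ n, all derivatives of y_j at τ = 0 up to order 2j−1 vanish, and the derivative of order 2j satisfies y_j^{(2j)}(0) = −∏_{i=2}^{j} α_i (the empty product for j = 1 being 1, so y_1''(0) = −1). -/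
/-!
In a chain driven only at its first mass, the effect of the force reaches mass `j` through
`j - 1` springs, and each spring costs two time derivatives.  Writing `V m` for the space of `C^m`
functions vanishing to order `m` at the initial time, the equation of mass `j` reads
`y_j'' = α_j y_{j-1} + w`, where `w` is a combination of `y_j, y_{j+1}, …`.  Integrating this
twice shows, by induction on `m` for all masses at once, that `y_j ∈ V (min m (2j))`; hence
`y_j ∈ V (2j)`.  Then `w ∈ V (2j)` does not contribute to the derivative of order `2j - 2` of the
right-hand side, so that `y_j^{(2j)} = α_j y_{j-1}^{(2j-2)}` at the initial time.
-/

open scoped Topology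

section VanishingOrder

variable {𝕜 F : Type*} [NontriviallyNormedField 𝕜] [NormedAddCommGroup F] [NormedSpace 𝕜 F]
  {f g : 𝕜 → F} {t₀ : 𝕜} {m : ℕ}

theorem contDiffAt_succ_iff_deriv :
    ContDiffAt 𝕜 (m + 1) f t₀ ↔
      (∀ᶠ t in 𝓝 t₀, DifferentiableAt 𝕜 f t) ∧ ContDiffAt 𝕜 m (deriv f) t₀ := by
  constructor
  · intro hf
    refine ⟨?_, (hf.fderiv_right le_rfl).clm_apply contDiffAt_const⟩
    filter_upwards [hf.eventually (by exact_mod_cast WithTop.coe_ne_top)] with t ht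
    exact ht.differentiableAt (by simp)
  · rintro ⟨hdiff, hderiv⟩
    refine contDiffAt_succ_iff_hasFDerivAt.2
      ⟨fun t ↦ ContinuousLinearMap.toSpanSingleton 𝕜 (deriv f t),
        ⟨_, hdiff, fun t ht ↦ ht.hasDerivAt.hasFDerivAt⟩, ?_⟩
    exact ContinuousLinearMap.toSpanSingletonCLE.contDiff.contDiffAt.comp t₀ hderiv

variable (𝕜 F) in
/-- The space of functions that are `C^m` at `t₀` and vanish there to order `m`, that is, whose
derivatives of order `0, …, m - 1` are zero at `t₀`.  Regularity is part of the definition because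
`iteratedDeriv` is meaningless without it. -/
def vanishingSubmodule (t₀ : 𝕜) (m : ℕ) : Submodule 𝕜 (𝕜 → F) where
  carrier := {f | ContDiffAt 𝕜 m f t₀ ∧ ∀ k < m, iteratedDeriv k f t₀ = 0}
  zero_mem' := ⟨contDiffAt_const, fun _ _ ↦ iteratedDeriv_const_zero⟩
  add_mem' := by
    rintro f g ⟨hf, hf₀⟩ ⟨hg, hg₀⟩
    refine ⟨hf.add hg, fun k hk ↦ ?_⟩
    have hkm : (k : WithTop ℕ∞) ≤ m := by exact_mod_cast hk.le
    rw [iteratedDeriv_add (hf.of_le hkm) (hg.of_le hkm), hf₀ k hk, hg₀ k hk, add_zero]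
  smul_mem' := by
    rintro c f ⟨hf, hf₀⟩
    refine ⟨contDiffAt_const.smul hf, fun k hk ↦ ?_⟩
    rw [iteratedDeriv_const_smul_field, hf₀ k hk, smul_zero]

theorem mem_vanishingSubmodule :
    f ∈ vanishingSubmodule 𝕜 F t₀ m ↔
      ContDiffAt 𝕜 m f t₀ ∧ ∀ k < m, iteratedDeriv k f t₀ = 0 :=
  Iff.rfl

theorem vanishingSubmodule_antitone : Antitone (vanishingSubmodule 𝕜 F t₀) :=
  fun _ _ hle _ hf ↦
    ⟨hf.1.of_le (by exact_mod_cast hle), fun k hk ↦ hf.2 k (hk.trans_le hle)⟩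

theorem mem_vanishingSubmodule_of_eventuallyEq (hfg : f =ᶠ[𝓝 t₀] g)
    (hg : g ∈ vanishingSubmodule 𝕜 F t₀ m) :
    f ∈ vanishingSubmodule 𝕜 F t₀ m :=
  ⟨hg.1.congr_of_eventuallyEq hfg, fun k hk ↦ (hfg.iteratedDeriv_eq k).trans (hg.2 k hk)⟩

theorem mem_vanishingSubmodule_succ_iff :
    f ∈ vanishingSubmodule 𝕜 F t₀ (m + 1) ↔
      (∀ᶠ t in 𝓝 t₀, DifferentiableAt 𝕜 f t) ∧ f t₀ = 0 ∧
        deriv f ∈ vanishingSubmodule 𝕜 F t₀ m := by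
  have hderivs : (∀ k < m + 1, iteratedDeriv k f t₀ = 0) ↔
      f t₀ = 0 ∧ ∀ k < m, iteratedDeriv k (deriv f) t₀ = 0 := by
    simp only [Nat.forall_lt_succ_left, iteratedDeriv_zero, iteratedDeriv_succ']
  rw [mem_vanishingSubmodule, mem_vanishingSubmodule, hderivs, Nat.cast_succ,
    contDiffAt_succ_iff_deriv]
  tauto

theorem mem_vanishingSubmodule_add_two (hf : f ∈ vanishingSubmodule 𝕜 F t₀ 2)
    (hf'' : deriv (deriv f) ∈ vanishingSubmodule 𝕜 F t₀ m) :
    f ∈ vanishingSubmodule 𝕜 F t₀ (m + 2) := by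
  obtain ⟨hdiff, hf₀, hf'⟩ := mem_vanishingSubmodule_succ_iff.1 hf
  obtain ⟨hdiff', hf'₀, -⟩ := mem_vanishingSubmodule_succ_iff.1 hf'
  exact mem_vanishingSubmodule_succ_iff.2
    ⟨hdiff, hf₀, mem_vanishingSubmodule_succ_iff.2 ⟨hdiff', hf'₀, hf''⟩⟩

theorem mem_vanishingSubmodule_two (hf : ContDiffAt 𝕜 2 f t₀) (hf₀ : f t₀ = 0)
    (hf'₀ : deriv f t₀ = 0) : f ∈ vanishingSubmodule 𝕜 F t₀ 2 := by
  refine ⟨hf, fun k hk ↦ ?_⟩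
  interval_cases k
  · rwa [iteratedDeriv_zero]
  · rwa [iteratedDeriv_one]

end VanishingOrder

section Cascade

variable {𝕜 F : Type*} [NontriviallyNormedField 𝕜] [NormedAddCommGroup F] [NormedSpace 𝕜 F]

/-- A second-order linear cascade `y 1, …, y n` starting from rest at time `t₀`: near `t₀`, the
acceleration of `y (j + 1)` is `α (j + 1) • y j` plus a combination of `y (j + 1), …, y n`.  Nothing
is asked of the acceleration of `y 1`, which is the input of the cascade. -/
structure IsCascadeFromRest (n : ℕ) (α : ℕ → 𝕜) (y : ℕ → 𝕜 → F) (t₀ : 𝕜) : Prop where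
  rest : ∀ j, 1 ≤ j → j ≤ n → y j ∈ vanishingSubmodule 𝕜 F t₀ 2
  coupling : ∀ j, 1 ≤ j → j < n → ∃ w ∈ Submodule.span 𝕜 (y '' Set.Icc (j + 1) n),
    deriv (deriv (y (j + 1))) =ᶠ[𝓝 t₀] α (j + 1) • y j + w

namespace IsCascadeFromRest

variable {n : ℕ} {α : ℕ → 𝕜} {y : ℕ → 𝕜 → F} {t₀ : 𝕜}

theorem mem_vanishingSubmodule_min (h : IsCascadeFromRest n α y t₀) (m : ℕ) :
    ∀ j, 1 ≤ j → j ≤ n → y j ∈ vanishingSubmodule 𝕜 F t₀ (min m (2 * j)) := by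
  induction m with
  | zero => exact fun j h1 hj ↦ vanishingSubmodule_antitone (by omega) (h.rest j h1 hj)
  | succ m ih =>
    intro j h1 hj
    obtain rfl | ⟨i, hi, rfl⟩ : j = 1 ∨ ∃ i, 1 ≤ i ∧ j = i + 1 := by
      rcases h1.eq_or_lt with rfl | h1
      exacts [.inl rfl, .inr ⟨j - 1, by omega, by omega⟩]
    · exact vanishingSubmodule_antitone (by omega) (h.rest 1 h1 hj)
    obtain ⟨w, hw, hode⟩ := h.coupling i hi hj
    have hw_mem : w ∈ vanishingSubmodule 𝕜 F t₀ (min m (2 * i)) := by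
      refine Submodule.span_le.2 ?_ hw
      rintro _ ⟨l, ⟨hil, hln⟩, rfl⟩
      exact vanishingSubmodule_antitone (by omega) (ih l (by omega) hln)
    have hacc : deriv (deriv (y (i + 1))) ∈ vanishingSubmodule 𝕜 F t₀ (min m (2 * i)) :=
      mem_vanishingSubmodule_of_eventuallyEq hode
        (add_mem (Submodule.smul_mem _ _ (ih i hi (by omega))) hw_mem)
    exact vanishingSubmodule_antitone (by omega)
      (mem_vanishingSubmodule_add_two (h.rest (i + 1) h1 hj) hacc)

theorem mem_vanishingSubmodule_two_mul (h : IsCascadeFromRest n α y t₀) {j : ℕ} (h1 : 1 ≤ j)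
    (hj : j ≤ n) : y j ∈ vanishingSubmodule 𝕜 F t₀ (2 * j) := by
  simpa only [min_self] using h.mem_vanishingSubmodule_min (2 * j) j h1 hj

theorem iteratedDeriv_two_mul_succ (h : IsCascadeFromRest n α y t₀) {j : ℕ} (h1 : 1 ≤ j)
    (hj : j < n) :
    iteratedDeriv (2 * (j + 1)) (y (j + 1)) t₀ = α (j + 1) • iteratedDeriv (2 * j) (y j) t₀ := by
  obtain ⟨w, hw, hode⟩ := h.coupling j h1 hj
  obtain ⟨hw_reg, hw_zero⟩ : w ∈ vanishingSubmodule 𝕜 F t₀ (2 * (j + 1)) := by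
    refine Submodule.span_le.2 ?_ hw
    rintro _ ⟨l, ⟨hjl, hln⟩, rfl⟩
    exact vanishingSubmodule_antitone (by omega)
      (h.mem_vanishingSubmodule_two_mul (by omega) hln)
  have hy_reg : ContDiffAt 𝕜 (2 * j : ℕ) (α (j + 1) • y j) t₀ :=
    (h.mem_vanishingSubmodule_two_mul h1 hj.le).1.const_smul _
  calc iteratedDeriv (2 * (j + 1)) (y (j + 1)) t₀
      = iteratedDeriv (2 * j) (deriv (deriv (y (j + 1)))) t₀ := by
        rw [mul_add_one, iteratedDeriv_succ', iteratedDeriv_succ']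
    _ = iteratedDeriv (2 * j) (α (j + 1) • y j + w) t₀ := hode.iteratedDeriv_eq _
    _ = α (j + 1) • iteratedDeriv (2 * j) (y j) t₀ + iteratedDeriv (2 * j) w t₀ := by
        rw [iteratedDeriv_add hy_reg (hw_reg.of_le (Nat.cast_le.2 (by omega))),
          iteratedDeriv_const_smul_field]
    _ = α (j + 1) • iteratedDeriv (2 * j) (y j) t₀ := by
        rw [hw_zero (2 * j) (by omega), add_zero]

theorem iteratedDeriv_two_mul (h : IsCascadeFromRest n α y t₀) {j : ℕ} (h1 : 1 ≤ j)
    (hj : j ≤ n) :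
    iteratedDeriv (2 * j) (y j) t₀ =
      (∏ i ∈ Finset.Icc 2 j, α i) • deriv (deriv (y 1)) t₀ := by
  induction j, h1 using Nat.le_induction with
  | base => simp [iteratedDeriv_succ]
  | succ j h1 ih =>
    rw [h.iteratedDeriv_two_mul_succ h1 hj, ih (by omega), Finset.prod_Icc_succ_top (by omega),
      smul_smul, mul_comm]

end IsCascadeFromRest

end Cascade

section SpringChain

variable {𝕜 F : Type*} [NontriviallyNormedField 𝕜] [NormedAddCommGroup F] [NormedSpace 𝕜 F]
  {n : ℕ} {α β : ℕ → 𝕜} {y : ℕ → 𝕜 → F} {t₀ : 𝕜}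

theorem isCascadeFromRest_of_springChain
    (hrest : ∀ j, 1 ≤ j → j ≤ n → y j ∈ vanishingSubmodule 𝕜 F t₀ 2)
    (heqj : ∀ j, 2 ≤ j → j ≤ n - 1 → ∀ᶠ t in 𝓝 t₀,
      deriv (deriv (y j)) t = α j • (y (j - 1) t - y j t) + β j • (y (j + 1) t - y j t))
    (heqn : ∀ᶠ t in 𝓝 t₀, deriv (deriv (y n)) t = α n • (y (n - 1) t - y n t)) :
    IsCascadeFromRest n α y t₀ where
  rest := hrest
  coupling j h1 hj := by
    have hmem : ∀ l, j + 1 ≤ l → l ≤ n → y l ∈ Submodule.span 𝕜 (y '' Set.Icc (j + 1) n) :=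
      fun l hjl hln ↦ Submodule.subset_span ⟨l, ⟨hjl, hln⟩, rfl⟩
    have hself : -(α (j + 1) • y (j + 1)) ∈ Submodule.span 𝕜 (y '' Set.Icc (j + 1) n) :=
      neg_mem (Submodule.smul_mem _ _ (hmem (j + 1) le_rfl hj))
    obtain rfl | hlt : n = j + 1 ∨ j + 2 ≤ n := by omega
    · refine ⟨_, hself, ?_⟩
      filter_upwards [heqn] with t ht
      simp only [ht, Nat.add_sub_cancel, Pi.add_apply, Pi.neg_apply, Pi.smul_apply]
      module
    · refine ⟨_, add_mem hself (Submodule.smul_mem _ (β (j + 1))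
        (sub_mem (hmem (j + 2) (by omega) hlt) (hmem (j + 1) le_rfl hj))), ?_⟩
      filter_upwards [heqj (j + 1) (by omega) (by omega)] with t ht
      simp only [ht, Nat.add_sub_cancel, Pi.add_apply, Pi.neg_apply, Pi.sub_apply, Pi.smul_apply]
      module

end SpringChain

theorem each_mass_initial_derivatives_general {𝕜 F : Type*} [NontriviallyNormedField 𝕜]
    [NormedAddCommGroup F] [NormedSpace 𝕜 F] (n : ℕ) (hn : 2 ≤ n) (α β : ℕ → 𝕜) (e : F)
    (t₀ : 𝕜) (y : ℕ → 𝕜 → F)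
    (hreg : ∀ j, 1 ≤ j → j ≤ n → ContDiffAt 𝕜 2 (y j) t₀)
    (heq1 : deriv (deriv (y 1)) t₀ = (y 2 t₀ - y 1 t₀) - e)
    (heqj : ∀ j, 2 ≤ j → j ≤ n - 1 → ∀ᶠ t in 𝓝 t₀,
      deriv (deriv (y j)) t = α j • (y (j - 1) t - y j t) + β j • (y (j + 1) t - y j t))
    (heqn : ∀ᶠ t in 𝓝 t₀, deriv (deriv (y n)) t = α n • (y (n - 1) t - y n t))
    (hy0 : ∀ j, 1 ≤ j → j ≤ n → y j t₀ = 0)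
    (hy0' : ∀ j, 1 ≤ j → j ≤ n → deriv (y j) t₀ = 0) :
    ∀ j, 1 ≤ j → j ≤ n →
      (∀ k ≤ 2 * j - 1, iteratedDeriv k (y j) t₀ = 0) ∧
        iteratedDeriv (2 * j) (y j) t₀ = -((∏ i ∈ Finset.Icc 2 j, α i) • e) := by
  have hcascade : IsCascadeFromRest n α y t₀ := isCascadeFromRest_of_springChain
    (fun j h1 hj ↦ mem_vanishingSubmodule_two (hreg j h1 hj) (hy0 j h1 hj) (hy0' j h1 hj))
    heqj heqn
  have hforce : deriv (deriv (y 1)) t₀ = -e := by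
    rw [heq1, hy0 1 le_rfl (by omega), hy0 2 one_le_two hn, sub_zero, zero_sub]
  intro j h1 hj
  refine ⟨fun k hk ↦ (hcascade.mem_vanishingSubmodule_two_mul h1 hj).2 k (by omega), ?_⟩
  rw [hcascade.iteratedDeriv_two_mul h1 hj, hforce, smul_neg]

/-- for every `1 ≤ j ≤ n`, all derivatives of `y j` at `0` up to order
`2j - 1` vanish and the derivative of order `2j` equals `-∏_{i=2}^j α i`. -/
theorem each_mass_initial_derivatives
    (n : ℕ) (hn : 2 ≤ n) (α β : ℕ → ℝ)
    (hα : ∀ j, 2 ≤ j → j ≤ n → 0 < α j)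
    (hβ : ∀ j, 2 ≤ j → j ≤ n - 1 → 0 < β j)
    (y : ℕ → ℝ → ℝ)
    (hsmooth : ∀ j, 1 ≤ j → j ≤ n → ContDiff ℝ (⊤ : ℕ∞) (y j))
    (heq1 : ∀ t : ℝ, deriv (deriv (y 1)) t = (y 2 t - y 1 t) - 1)
    (heqj : ∀ j, 2 ≤ j → j ≤ n - 1 → ∀ t : ℝ,
      deriv (deriv (y j)) t = α j * (y (j - 1) t - y j t) + β j * (y (j + 1) t - y j t))
    (heqn : ∀ t : ℝ, deriv (deriv (y n)) t = α n * (y (n - 1) t - y n t))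
    (hy0 : ∀ j, 1 ≤ j → j ≤ n → y j 0 = 0)
    (hy0' : ∀ j, 1 ≤ j → j ≤ n → deriv (y j) 0 = 0) :
    ∀ j, 1 ≤ j → j ≤ n →
      (∀ k ≤ 2 * j - 1, iteratedDeriv k (y j) 0 = 0) ∧
        iteratedDeriv (2 * j) (y j) 0 = -∏ i ∈ Finset.Icc 2 j, α i := by
  simpa only [smul_eq_mul, mul_one] using
    each_mass_initial_derivatives_general n hn α β 1 0 y
      (fun j h1 hj ↦ (contDiff_infty.1 (hsmooth j h1 hj) 2).contDiffAt) (heq1 0)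
      (fun j h2 hj ↦ .of_forall (heqj j h2 hj)) (.of_forall heqn) hy0 hy0'
end

section
/- For every 1 ≤ j ≤ n define Q_j = ((∏_{i=1}^{j−1} k_i) (Σ_{i=1}^n m_i) g) / (∏_{i=1}^{j} m_i). Then all derivatives of z_j at t = 0 up to order 2j−1 vanish, and z_j^{(2j)}(0) = −Q_j; consequently z_j(t) + Q_j t^{2j}/(2j)! = o(t^{2j}) as t → 0. -/
/-!
The acceleration of the `(j + 1)`-st mass is a multiple of `z j` plus a combination of the `z i`
with `i > j`. If every `z i` with `i ≥ j` vanishes to order `2 * j` at the moment of release, then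
so does this acceleration, and two integrations with zero initial data show that every `z i` with
`i ≥ j + 1` vanishes to order `2 * (j + 1)`. In the derivative of order `2 * j` of the acceleration,
only the contribution of `z j` then survives, so the leading derivative is multiplied by
`k j / m (j + 1)` from one mass to the next, starting from the initial acceleration of the first
mass.
-/

open Submodule
open scoped Nat Topology

section VanishingToOrder

variable {𝕜 E : Type*} [NontriviallyNormedField 𝕜] [NormedAddCommGroup E] [NormedSpace 𝕜 E]
  {x : 𝕜} {f : 𝕜 → E} {N : ℕ}

/-- The space of functions `𝕜 → E` vanishing to order `N` at `x`: those whose derivatives of order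
less than `N` are zero at `x`. Being of class `C^N` on all of `𝕜` is part of the definition, so that
these functions form a subspace and no derivative below takes a junk value. -/
def vanishingToOrder (E : Type*) [NormedAddCommGroup E] [NormedSpace 𝕜 E] (x : 𝕜) (N : ℕ) :
    Submodule 𝕜 (𝕜 → E) where
  carrier := {f | ContDiff 𝕜 N f ∧ ∀ l < N, iteratedDeriv l f x = 0}
  zero_mem' := ⟨contDiff_const, fun _ _ ↦ iteratedDeriv_const_zero⟩
  add_mem' := by
    rintro f h ⟨hf, hf0⟩ ⟨hh, hh0⟩
    refine ⟨hf.add hh, fun l hl ↦ ?_⟩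
    have hfl : ContDiff 𝕜 l f := hf.of_le (mod_cast hl.le)
    have hhl : ContDiff 𝕜 l h := hh.of_le (mod_cast hl.le)
    rw [iteratedDeriv_add hfl.contDiffAt hhl.contDiffAt, hf0 l hl, hh0 l hl, add_zero]
  smul_mem' := by
    rintro c f ⟨hf, hf0⟩
    exact ⟨hf.const_smul c, fun l hl ↦ by
      rw [iteratedDeriv_const_smul_field, hf0 l hl, smul_zero]⟩

theorem mem_vanishingToOrder :
    f ∈ vanishingToOrder E x N ↔ ContDiff 𝕜 N f ∧ ∀ l < N, iteratedDeriv l f x = 0 :=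
  Iff.rfl

theorem vanishingToOrder_antitone : Antitone (vanishingToOrder E x) := fun _ _ hMN _ hf ↦
  ⟨hf.1.of_le (mod_cast hMN), fun l hl ↦ hf.2 l (hl.trans_le hMN)⟩

theorem mem_vanishingToOrder_succ_iff :
    f ∈ vanishingToOrder E x (N + 1) ↔
      Differentiable 𝕜 f ∧ f x = 0 ∧ deriv f ∈ vanishingToOrder E x N := by
  simp only [mem_vanishingToOrder, Nat.cast_add, Nat.cast_one, contDiff_succ_iff_deriv,
    Nat.forall_lt_succ_left, iteratedDeriv_zero, iteratedDeriv_succ', WithTop.natCast_ne_top,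
    IsEmpty.forall_iff, true_and]
  tauto

theorem isLittleO_sub_of_mem_vanishingToOrder {E : Type*} [NormedAddCommGroup E] [NormedSpace ℝ E]
    {x : ℝ} {f : ℝ → E} {N : ℕ} (hf : f ∈ vanishingToOrder E x N) :
    (fun t ↦ f t - ((t - x) ^ N / N !) • iteratedDeriv N f x) =o[𝓝 x] fun t ↦ (t - x) ^ N := by
  refine (taylor_isLittleO_univ hf.1).congr_left fun t ↦ ?_
  have lower_terms_eq_zero :
      ∑ l ∈ Finset.range N, ((l ! : ℝ)⁻¹ * (t - x) ^ l) • iteratedDeriv l f x = 0 :=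
    Finset.sum_eq_zero fun l hl ↦ by rw [hf.2 l (Finset.mem_range.1 hl), smul_zero]
  simp only [taylor_within_apply, iteratedDerivWithin_univ]
  rw [Finset.sum_range_succ, lower_terms_eq_zero, zero_add, div_eq_inv_mul]

end VanishingToOrder

section Cascade

variable {𝕜 E : Type*} [NontriviallyNormedField 𝕜] [NormedAddCommGroup E] [NormedSpace 𝕜 E]
  {x : 𝕜} {n : ℕ} {z : ℕ → 𝕜 → E} {a : ℕ → 𝕜}

theorem span_image_Icc_le_vanishingToOrder {i N : ℕ}
    (h : ∀ j ∈ Set.Icc i n, z j ∈ vanishingToOrder E x N) :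
    span 𝕜 (z '' Set.Icc i n) ≤ vanishingToOrder E x N :=
  span_le.2 (Set.image_subset_iff.2 h)

theorem mem_vanishingToOrder_two_mul_of_deriv_deriv_mem_span
    (hinit : ∀ j ∈ Set.Icc 1 n, z j ∈ vanishingToOrder E x 2)
    (hz : ∀ j ∈ Set.Ico 1 n, deriv (deriv (z (j + 1))) ∈ span 𝕜 (z '' Set.Icc j n))
    {j : ℕ} (hj : j ∈ Set.Icc 1 n) : z j ∈ vanishingToOrder E x (2 * j) := by
  suffices h : ∀ i, 1 ≤ i → ∀ j ∈ Set.Icc i n, z j ∈ vanishingToOrder E x (2 * i) from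
    h j hj.1 j ⟨le_rfl, hj.2⟩
  intro i hi
  induction i, hi using Nat.le_induction with
  | base => exact hinit
  | succ i hi ih =>
    rintro (_ | j) ⟨hij, hjn⟩
    · omega
    have deriv_deriv_mem : deriv (deriv (z (j + 1))) ∈ vanishingToOrder E x (2 * i) :=
      span_image_Icc_le_vanishingToOrder (fun l hl ↦ ih l ⟨by grind, hl.2⟩)
        (hz j ⟨by omega, hjn⟩)
    obtain ⟨hdiff, hzero, hderiv⟩ := mem_vanishingToOrder_succ_iff.1 (hinit (j + 1) ⟨by omega, hjn⟩)
    obtain ⟨hdiff', hzero', -⟩ := mem_vanishingToOrder_succ_iff.1 hderiv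
    exact mem_vanishingToOrder_succ_iff.2
      ⟨hdiff, hzero, mem_vanishingToOrder_succ_iff.2 ⟨hdiff', hzero', deriv_deriv_mem⟩⟩

theorem deriv_deriv_mem_span_of_sub_smul_mem_span {j : ℕ} {c : 𝕜} (hj : j ≤ n)
    (hz : deriv (deriv (z (j + 1))) - c • z j ∈ span 𝕜 (z '' Set.Icc (j + 1) n)) :
    deriv (deriv (z (j + 1))) ∈ span 𝕜 (z '' Set.Icc j n) := by
  rw [← sub_add_cancel (deriv (deriv (z (j + 1)))) (c • z j)]
  exact add_mem (span_mono (Set.image_mono (Set.Icc_subset_Icc_left j.le_succ)) hz)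
    (smul_mem _ _ (subset_span (Set.mem_image_of_mem z ⟨le_rfl, hj⟩)))

theorem iteratedDeriv_two_mul_eq_prod_smul
    (hinit : ∀ j ∈ Set.Icc 1 n, z j ∈ vanishingToOrder E x 2)
    (hz : ∀ j ∈ Set.Ico 1 n,
      deriv (deriv (z (j + 1))) - a j • z j ∈ span 𝕜 (z '' Set.Icc (j + 1) n))
    {j : ℕ} (hj : j ∈ Set.Icc 1 n) :
    iteratedDeriv (2 * j) (z j) x = (∏ i ∈ Finset.Ico 1 j, a i) • deriv (deriv (z 1)) x := by
  have hvanish : ∀ i ∈ Set.Icc 1 n, z i ∈ vanishingToOrder E x (2 * i) := fun i hi ↦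
    mem_vanishingToOrder_two_mul_of_deriv_deriv_mem_span hinit
      (fun l hl ↦ deriv_deriv_mem_span_of_sub_smul_mem_span hl.2.le (hz l hl)) hi
  obtain ⟨hj1, hjn⟩ := hj
  induction j, hj1 using Nat.le_induction with
  | base => simp [iteratedDeriv_succ']
  | succ j hj1 ih =>
    set w := deriv (deriv (z (j + 1))) - a j • z j with hw
    have w_mem : w ∈ vanishingToOrder E x (2 * j + 1) :=
      span_image_Icc_le_vanishingToOrder (fun i hi ↦ vanishingToOrder_antitone (by grind)
        (hvanish i ⟨by grind, hi.2⟩)) (hz j ⟨hj1, hjn⟩)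
    have smul_contDiff : ContDiff 𝕜 (2 * j : ℕ) (a j • z j) :=
      (hvanish j ⟨hj1, by omega⟩).1.const_smul (a j)
    have w_contDiff : ContDiff 𝕜 (2 * j : ℕ) w := (vanishingToOrder_antitone (by omega) w_mem).1
    calc iteratedDeriv (2 * (j + 1)) (z (j + 1)) x
        = iteratedDeriv (2 * j) (a j • z j + w) x := by
          rw [hw, add_sub_cancel, mul_add_one, iteratedDeriv_succ', iteratedDeriv_succ']
      _ = a j • iteratedDeriv (2 * j) (z j) x := by
          rw [iteratedDeriv_add smul_contDiff.contDiffAt w_contDiff.contDiffAt,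
            iteratedDeriv_const_smul_field, w_mem.2 _ (Nat.lt_succ_self _), add_zero]
      _ = (∏ i ∈ Finset.Ico 1 (j + 1), a i) • deriv (deriv (z 1)) x := by
          rw [ih (by omega), smul_smul, Finset.prod_Ico_succ_top hj1, mul_comm]

end Cascade

section SpringChain

variable {E : Type*} [NormedAddCommGroup E] [NormedSpace ℝ E]
  {n : ℕ} {m k : ℕ → ℝ} {g : E} {z : ℕ → ℝ → E}

/-- The released mass–spring system: the displacements `z 1, …, z n` of masses `m 1, …, m n` joined
by springs `k 1, …, k (n - 1)`, at rest at time `0`, when the first mass starts to carry the whole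
weight. Displacements and gravity are vectors of a normed space `E`, with `E = ℝ` for the vertical
chain. -/
structure IsReleasedSpringChain (n : ℕ) (m k : ℕ → ℝ) (g : E) (z : ℕ → ℝ → E) : Prop where
  two_le : 2 ≤ n
  mass_ne_zero : ∀ j, 1 ≤ j → j ≤ n → m j ≠ 0
  contDiff : ∀ j, 1 ≤ j → j ≤ n → ContDiff ℝ 2 (z j)
  motion_first : ∀ t, m 1 • deriv (deriv (z 1)) t =
    k 1 • (z 2 t - z 1 t) - (∑ j ∈ Finset.Icc 1 n, m j) • g
  motion_interior : ∀ j, 2 ≤ j → j ≤ n - 1 → ∀ t, m j • deriv (deriv (z j)) t =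
    k (j - 1) • (z (j - 1) t - z j t) + k j • (z (j + 1) t - z j t)
  motion_last : ∀ t, m n • deriv (deriv (z n)) t = k (n - 1) • (z (n - 1) t - z n t)
  position_zero : ∀ j, 1 ≤ j → j ≤ n → z j 0 = 0
  velocity_zero : ∀ j, 1 ≤ j → j ≤ n → deriv (z j) 0 = 0

/-- The coefficient `Q_j` of `-t ^ (2 * j) / (2 * j)!` in the displacement of the `j`-th mass. -/
noncomputable def releaseCoeff (n : ℕ) (m k : ℕ → ℝ) (g : E) (j : ℕ) : E :=
  (((∏ i ∈ Finset.Icc 1 (j - 1), k i) * ∑ i ∈ Finset.Icc 1 n, m i) /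
    ∏ i ∈ Finset.Icc 1 j, m i) • g

theorem prod_Ico_div_succ_mul_div_eq {K : Type*} [Field K] (k m : ℕ → K) (c : K) {j : ℕ}
    (hj : 1 ≤ j) :
    (∏ i ∈ Finset.Ico 1 j, k i / m (i + 1)) * (c / m 1) =
      ((∏ i ∈ Finset.Icc 1 (j - 1), k i) * c) / ∏ i ∈ Finset.Icc 1 j, m i := by
  have prod_masses : (∏ i ∈ Finset.Ico 1 j, m (i + 1)) * m 1 = ∏ i ∈ Finset.Icc 1 j, m i := by
    rw [Finset.prod_Ico_add', mul_comm, ← Finset.Ico_add_one_right_eq_Icc,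
      Finset.prod_eq_prod_Ico_succ_bot (by omega : 1 < j + 1)]
  have Icc_pred_eq : Finset.Icc 1 (j - 1) = Finset.Ico 1 j := by grind
  rw [Finset.prod_div_distrib, div_mul_div_comm, prod_masses, Icc_pred_eq]

namespace IsReleasedSpringChain

theorem mem_vanishingToOrder_two (h : IsReleasedSpringChain n m k g z) {j : ℕ}
    (hj : j ∈ Set.Icc 1 n) : z j ∈ vanishingToOrder E 0 2 := by
  refine mem_vanishingToOrder.2 ⟨h.contDiff j hj.1 hj.2, fun l hl ↦ ?_⟩
  interval_cases l
  · simpa using h.position_zero j hj.1 hj.2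
  · simpa using h.velocity_zero j hj.1 hj.2

theorem deriv_deriv_first_zero (h : IsReleasedSpringChain n m k g z) :
    deriv (deriv (z 1)) 0 = -(((∑ i ∈ Finset.Icc 1 n, m i) / m 1) • g) := by
  have h1n : 1 ≤ n := one_le_two.trans h.two_le
  have hmotion := h.motion_first 0
  rw [h.position_zero 1 le_rfl h1n, h.position_zero 2 one_le_two h.two_le, sub_zero, smul_zero,
    zero_sub, ← eq_inv_smul_iff₀ (h.mass_ne_zero 1 le_rfl h1n)] at hmotion
  rw [hmotion, smul_neg, smul_smul, div_eq_inv_mul]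

theorem deriv_deriv_succ_sub_smul_mem_span (h : IsReleasedSpringChain n m k g z) {j : ℕ}
    (hj : j ∈ Set.Ico 1 n) :
    deriv (deriv (z (j + 1))) - (k j / m (j + 1)) • z j ∈ span ℝ (z '' Set.Icc (j + 1) n) := by
  obtain ⟨hj1, hjn⟩ := hj
  have hm : m (j + 1) ≠ 0 := h.mass_ne_zero (j + 1) (by omega) hjn
  have z_mem : ∀ i ∈ Set.Icc (j + 1) n, z i ∈ span ℝ (z '' Set.Icc (j + 1) n) := fun i hi ↦
    subset_span (Set.mem_image_of_mem z hi)
  rw [← smul_mem_iff _ hm, smul_sub, smul_smul, mul_div_cancel₀ _ hm]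
  obtain rfl | hlt := (Nat.succ_le_of_lt hjn).eq_or_lt
  · have hmotion : m (j + 1) • deriv (deriv (z (j + 1))) - k j • z j = -k j • z (j + 1) := by
      ext t
      have := h.motion_last t
      simp only [Nat.add_sub_cancel, Nat.succ_eq_add_one] at this
      simp only [Pi.sub_apply, Pi.smul_apply, this]
      module
    rw [hmotion]
    exact smul_mem _ _ (z_mem _ ⟨le_rfl, le_rfl⟩)
  · have hmotion : m (j + 1) • deriv (deriv (z (j + 1))) - k j • z j =
        -k j • z (j + 1) + k (j + 1) • (z (j + 2) - z (j + 1)) := by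
      ext t
      have := h.motion_interior (j + 1) (by omega) (by omega) t
      simp only [Nat.add_sub_cancel] at this
      simp only [Pi.sub_apply, Pi.add_apply, Pi.smul_apply, this]
      module
    rw [hmotion]
    exact add_mem (smul_mem _ _ (z_mem _ ⟨le_rfl, hjn⟩))
      (smul_mem _ _ (sub_mem (z_mem _ ⟨by omega, hlt⟩) (z_mem _ ⟨le_rfl, hjn⟩)))

theorem mem_vanishingToOrder_two_mul (h : IsReleasedSpringChain n m k g z) {j : ℕ}
    (hj : j ∈ Set.Icc 1 n) : z j ∈ vanishingToOrder E 0 (2 * j) :=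
  mem_vanishingToOrder_two_mul_of_deriv_deriv_mem_span (fun _ ↦ h.mem_vanishingToOrder_two)
    (fun _ hi ↦ deriv_deriv_mem_span_of_sub_smul_mem_span hi.2.le
      (h.deriv_deriv_succ_sub_smul_mem_span hi)) hj

theorem iteratedDeriv_two_mul_zero (h : IsReleasedSpringChain n m k g z) {j : ℕ}
    (hj : j ∈ Set.Icc 1 n) : iteratedDeriv (2 * j) (z j) 0 = -releaseCoeff n m k g j := by
  rw [iteratedDeriv_two_mul_eq_prod_smul (fun _ ↦ h.mem_vanishingToOrder_two)
      (fun _ ↦ h.deriv_deriv_succ_sub_smul_mem_span) hj,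
    h.deriv_deriv_first_zero, smul_neg, smul_smul, prod_Ico_div_succ_mul_div_eq k m _ hj.1,
    releaseCoeff]

end IsReleasedSpringChain

end SpringChain

theorem dimensional_each_mass_short_time_general {E : Type*} [NormedAddCommGroup E]
    [NormedSpace ℝ E] {n : ℕ} {m k : ℕ → ℝ} {g : E} {z : ℕ → ℝ → E}
    (h : IsReleasedSpringChain n m k g z) (j : ℕ) (hj1 : 1 ≤ j) (hjn : j ≤ n) :
    (∀ l ≤ 2 * j - 1, iteratedDeriv l (z j) 0 = 0) ∧
      iteratedDeriv (2 * j) (z j) 0 = -releaseCoeff n m k g j ∧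
      (fun t : ℝ ↦ z j t + (t ^ (2 * j) / (2 * j)!) • releaseCoeff n m k g j)
        =o[𝓝 0] fun t : ℝ ↦ t ^ (2 * j) := by
  have hvanish := h.mem_vanishingToOrder_two_mul ⟨hj1, hjn⟩
  have hderiv := h.iteratedDeriv_two_mul_zero ⟨hj1, hjn⟩
  refine ⟨fun l hl ↦ hvanish.2 l (by omega), hderiv, ?_⟩
  simpa only [hderiv, sub_zero, smul_neg, sub_neg_eq_add] using
    isLittleO_sub_of_mem_vanishingToOrder hvanish


/-- for each 1 ≤ j ≤ n, with Q_j = ((∏_{i<j} k_i)(Σ m_i) g)/(∏_{i≤j} m_i), the derivatives of z_j at 0 up to order 2j-1 vanish, z_j^{(2j)}(0) = -Q_j, and z_j(t) + Q_j t^(2j)/(2j)! = o(t^(2j)) as t → 0. -/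
theorem dimensional_each_mass_short_time
    (n : ℕ) (hn : 2 ≤ n) (m k : ℕ → ℝ) (g : ℝ)
    (hm : ∀ j, 1 ≤ j → j ≤ n → 0 < m j)
    (hk : ∀ j, 1 ≤ j → j ≤ n - 1 → 0 < k j)
    (hg : 0 < g)
    (z : ℕ → ℝ → ℝ)
    (hsmooth : ∀ j, 1 ≤ j → j ≤ n → ContDiff ℝ (⊤ : ℕ∞) (z j))
    (heq1 : ∀ t : ℝ, m 1 * deriv (deriv (z 1)) t =
      k 1 * (z 2 t - z 1 t) - (∑ j ∈ Finset.Icc 1 n, m j) * g)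
    (heqj : ∀ j, 2 ≤ j → j ≤ n - 1 → ∀ t : ℝ, m j * deriv (deriv (z j)) t =
      k (j - 1) * (z (j - 1) t - z j t) + k j * (z (j + 1) t - z j t))
    (heqn : ∀ t : ℝ, m n * deriv (deriv (z n)) t = k (n - 1) * (z (n - 1) t - z n t))
    (hz0 : ∀ j, 1 ≤ j → j ≤ n → z j 0 = 0)
    (hz0' : ∀ j, 1 ≤ j → j ≤ n → deriv (z j) 0 = 0) :
    ∀ j, 1 ≤ j → j ≤ n →
      (∀ l ≤ 2 * j - 1, iteratedDeriv l (z j) 0 = 0) ∧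
      iteratedDeriv (2 * j) (z j) 0 =
        -(((∏ i ∈ Finset.Icc 1 (j - 1), k i) * (∑ i ∈ Finset.Icc 1 n, m i) * g) /
          ∏ i ∈ Finset.Icc 1 j, m i) ∧
      (fun t : ℝ => z j t +
        (((∏ i ∈ Finset.Icc 1 (j - 1), k i) * (∑ i ∈ Finset.Icc 1 n, m i) * g) /
          ∏ i ∈ Finset.Icc 1 j, m i) * t ^ (2 * j) / (Nat.factorial (2 * j)))
        =o[nhds (0 : ℝ)] fun t : ℝ => t ^ (2 * j) := by
  simpa only [releaseCoeff, smul_eq_mul, div_mul_eq_mul_div, mul_comm (_ ^ _)] using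
    dimensional_each_mass_short_time_general (E := ℝ) ⟨hn, fun j h1 h2 ↦ (hm j h1 h2).ne',
      fun j h1 h2 ↦ contDiff_infty.1 (hsmooth j h1 h2) 2, heq1, heqj, heqn, hz0, hz0'⟩
end

section
/- At long time the bottom mass falls with the acceleration of gravity and the corrections are subdominant: z_n(t)/t² tends to −g/2 as t → +∞. -/
/-!
Differentiating Newton's equations of a spring network under constant external forces removes those
forces: the velocities solve the force-free equations, so an energy built from velocities and
accelerations is conserved. Its elastic part bounds the relative velocity of any two masses joined
by a spring, hence, on a connected network, of any two masses. The springs do not affect the total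
momentum, which therefore grows linearly, at the rate of the total external force. Together, each
velocity stays within bounded distance of `A * t`, where `A` is the acceleration of the centre of
mass, and integrating gives `x(t) / t ^ 2 → A / 2`.
-/

open Filter Topology Asymptotics

section Calculus

variable {E : Type*} [NormedAddCommGroup E] [NormedSpace ℝ E]

theorem eq_of_forall_hasDerivAt_zero {f : ℝ → E} (hf : ∀ t, HasDerivAt f 0 t) (s t : ℝ) :
    f s = f t :=
  is_const_of_deriv_eq_zero (fun r ↦ (hf r).differentiableAt) (fun r ↦ (hf r).deriv) s t

theorem isBigO_id_atTop_of_norm_hasDerivAt_le {f f' : ℝ → E} {B : ℝ}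
    (hf : ∀ t, HasDerivAt f (f' t) t) (hB : ∀ t, ‖f' t‖ ≤ B) : f =O[atTop] fun t ↦ t := by
  have growth (t : ℝ) : ‖f t - f 0‖ ≤ B * ‖t - 0‖ :=
    convex_univ.norm_image_sub_le_of_norm_hasDerivWithin_le (fun s _ ↦ (hf s).hasDerivWithinAt)
      (fun s _ ↦ hB s) (Set.mem_univ 0) (Set.mem_univ t)
  have hsub : (fun t ↦ f t - f 0) =O[atTop] fun t ↦ t :=
    .of_bound B (.of_forall fun t ↦ by simpa using growth t)
  have hconst : (fun _ : ℝ ↦ f 0) =O[atTop] fun t ↦ t := (isLittleO_const_id_atTop (f 0)).isBigO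
  simpa using hsub.add hconst

theorem tendsto_div_sq_of_abs_hasDerivAt_sub_le {f f' : ℝ → ℝ} {a B : ℝ}
    (hf : ∀ t, HasDerivAt f (f' t) t) (hB : ∀ t, |f' t - a * t| ≤ B) :
    Tendsto (fun t ↦ f t / t ^ 2) atTop (𝓝 (a / 2)) := by
  have hderiv (t : ℝ) : HasDerivAt (fun s ↦ f s - a / 2 * s ^ 2) (f' t - a * t) t := by
    refine ((hf t).fun_sub ((hasDerivAt_pow 2 t).const_mul (a / 2))).congr_deriv ?_
    ring
  have hlittle : (fun t ↦ f t - a / 2 * t ^ 2) =o[atTop] fun t : ℝ ↦ t ^ 2 :=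
    (isBigO_id_atTop_of_norm_hasDerivAt_le hderiv hB).trans_isLittleO <| by
      simpa only [pow_one] using isLittleO_pow_pow_atTop_of_lt (𝕜 := ℝ) one_lt_two
  have hlim := hlittle.tendsto_div_nhds_zero.add_const (a / 2)
  rw [zero_add] at hlim
  refine hlim.congr' ?_
  filter_upwards [eventually_ne_atTop 0] with t ht
  field_simp
  ring

end Calculus

theorem exists_dist_le_of_preconnected {ι α E : Type*} [PseudoMetricSpace E]
    {G : SimpleGraph ι} (hG : G.Preconnected) {u : α → ι → E}
    (hadj : ∀ i j, G.Adj i j → ∃ B, ∀ t, dist (u t i) (u t j) ≤ B) (i j : ι) :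
    ∃ B, ∀ t, dist (u t i) (u t j) ≤ B := by
  obtain ⟨p⟩ := hG i j
  induction p with
  | nil => exact ⟨0, by simp⟩
  | cons hstep _ ih =>
    obtain ⟨B, hB⟩ := hadj _ _ hstep
    obtain ⟨C, hC⟩ := ih
    exact ⟨B + C, fun t ↦ (dist_triangle _ _ _).trans (add_le_add (hB t) (hC t))⟩

section Network

variable {ι : Type*}

/-- `k` is a stiffness matrix whose springs join at least the masses adjacent in `G`: `k i j` is the
stiffness of the spring between `i` and `j`, and `k i j = 0` means that there is none. -/
structure IsStiffnessMatrix (G : SimpleGraph ι) (k : ι → ι → ℝ) : Prop where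
  symm (i j : ι) : k i j = k j i
  nonneg (i j : ι) : 0 ≤ k i j
  pos_of_adj {i j : ι} : G.Adj i j → 0 < k i j

variable [Fintype ι]

/-- The force that the springs of stiffness matrix `k` exert on mass `i` in the configuration `u` of
a network of masses on a line. Positions are measured from a rest configuration of the springs. -/
def springForce (k : ι → ι → ℝ) (u : ι → ℝ) (i : ι) : ℝ :=
  ∑ j, k i j * (u j - u i)

/-- The kinetic plus elastic energy of a spring network in configuration `u` with velocities `w`.
The factor `4` is there because each spring occurs twice in the double sum. -/
noncomputable def springEnergy (m : ι → ℝ) (k : ι → ι → ℝ) (u w : ι → ℝ) : ℝ :=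
  (∑ i, m i * w i ^ 2) / 2 + (∑ i, ∑ j, k i j * (u j - u i) ^ 2) / 4

variable {m F : ι → ℝ} {k : ι → ι → ℝ} {x v a : ℝ → ι → ℝ}

theorem sum_mul_springForce (hk : ∀ i j, k i j = k j i) (u w : ι → ℝ) :
    ∑ i, w i * springForce k u i = -(∑ i, ∑ j, k i j * ((u j - u i) * (w j - w i))) / 2 := by
  have swap : ∑ i, ∑ j, w j * (k i j * (u j - u i)) = -∑ i, w i * springForce k u i := by
    rw [Finset.sum_comm, ← Finset.sum_neg_distrib]
    refine Finset.sum_congr rfl fun i _ ↦ ?_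
    rw [springForce, Finset.mul_sum, ← Finset.sum_neg_distrib]
    refine Finset.sum_congr rfl fun j _ ↦ ?_
    rw [hk j i]
    ring
  have split : ∑ i, ∑ j, k i j * ((u j - u i) * (w j - w i)) =
      ∑ i, ∑ j, w j * (k i j * (u j - u i)) - ∑ i, w i * springForce k u i := by
    simp only [springForce, Finset.mul_sum, ← Finset.sum_sub_distrib]
    refine Finset.sum_congr rfl fun i _ ↦ Finset.sum_congr rfl fun j _ ↦ ?_
    ring
  rw [split, swap]
  ring

theorem sum_springForce (hk : ∀ i j, k i j = k j i) (u : ι → ℝ) :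
    ∑ i, springForce k u i = 0 := by
  simpa using sum_mul_springForce hk u 1

theorem hasDerivAt_springForce {t : ℝ} {x' : ι → ℝ} (hx : HasDerivAt x x' t) (i : ι) :
    HasDerivAt (fun s ↦ springForce k (x s) i) (springForce k x' i) t :=
  .fun_sum fun j _ ↦
    ((hasDerivAt_pi.1 hx j).sub (hasDerivAt_pi.1 hx i)).const_mul (k i j)

theorem springEnergy_eq_of_force_free (hk : ∀ i j, k i j = k j i)
    (hx : ∀ t, HasDerivAt x (v t) t) (hv : ∀ t, HasDerivAt v (a t) t)
    (newton : ∀ t i, m i * a t i = springForce k (x t) i) (s t : ℝ) :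
    springEnergy m k (x s) (v s) = springEnergy m k (x t) (v t) := by
  refine eq_of_forall_hasDerivAt_zero (f := fun r ↦ springEnergy m k (x r) (v r)) (fun r ↦ ?_) s t
  have hx' := hasDerivAt_pi.1 (hx r)
  have hv' := hasDerivAt_pi.1 (hv r)
  have kinetic : HasDerivAt (fun r ↦ ∑ i, m i * v r i ^ 2)
      (2 * ∑ i, v r i * springForce k (x r) i) r := by
    refine (HasDerivAt.fun_sum fun i _ ↦ ((hv' i).fun_pow 2).const_mul (m i)).congr_deriv ?_
    rw [Finset.mul_sum]
    refine Finset.sum_congr rfl fun i _ ↦ ?_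
    rw [← newton]
    ring
  have elastic : HasDerivAt (fun r ↦ ∑ i, ∑ j, k i j * (x r j - x r i) ^ 2)
      (2 * ∑ i, ∑ j, k i j * ((x r j - x r i) * (v r j - v r i))) r := by
    refine (HasDerivAt.fun_sum fun i _ ↦ HasDerivAt.fun_sum fun j _ ↦
      (((hx' j).fun_sub (hx' i)).fun_pow 2).const_mul (k i j)).congr_deriv ?_
    simp only [Finset.mul_sum]
    refine Finset.sum_congr rfl fun i _ ↦ Finset.sum_congr rfl fun j _ ↦ ?_
    ring
  refine ((kinetic.div_const 2).fun_add (elastic.div_const 4)).congr_deriv ?_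
  rw [sum_mul_springForce hk]
  ring

theorem mul_sq_sub_le_springEnergy (hm : ∀ i, 0 ≤ m i) (hk : ∀ i j, 0 ≤ k i j) (u w : ι → ℝ)
    (i j : ι) : k i j * (u j - u i) ^ 2 ≤ 4 * springEnergy m k u w := by
  have kinetic : 0 ≤ ∑ i, m i * w i ^ 2 :=
    Finset.sum_nonneg fun i _ ↦ mul_nonneg (hm i) (sq_nonneg _)
  have term (i j : ι) : 0 ≤ k i j * (u j - u i) ^ 2 := mul_nonneg (hk i j) (sq_nonneg _)
  have elastic : k i j * (u j - u i) ^ 2 ≤ ∑ i, ∑ j, k i j * (u j - u i) ^ 2 :=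
    calc k i j * (u j - u i) ^ 2
        ≤ ∑ j, k i j * (u j - u i) ^ 2 :=
          Finset.single_le_sum (f := fun j ↦ k i j * (u j - u i) ^ 2)
            (fun j _ ↦ term i j) (Finset.mem_univ j)
      _ ≤ ∑ i, ∑ j, k i j * (u j - u i) ^ 2 :=
          Finset.single_le_sum (f := fun i ↦ ∑ j, k i j * (u j - u i) ^ 2)
            (fun i _ ↦ Finset.sum_nonneg fun j _ ↦ term i j) (Finset.mem_univ i)
  rw [springEnergy]
  linarith

theorem exists_dist_le_of_force_free {G : SimpleGraph ι} (hG : G.Preconnected)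
    (hm : ∀ i, 0 ≤ m i) (hk : IsStiffnessMatrix G k)
    (hx : ∀ t, HasDerivAt x (v t) t) (hv : ∀ t, HasDerivAt v (a t) t)
    (newton : ∀ t i, m i * a t i = springForce k (x t) i) (i j : ι) :
    ∃ B, ∀ t, dist (x t i) (x t j) ≤ B := by
  refine exists_dist_le_of_preconnected hG (fun i j hij ↦ ?_) i j
  simp only [dist_comm (x _ i), Real.dist_eq]
  refine ⟨√(4 * springEnergy m k (x 0) (v 0) / k i j), fun t ↦ Real.abs_le_sqrt ?_⟩
  rw [le_div_iff₀' (hk.pos_of_adj hij), springEnergy_eq_of_force_free hk.symm hx hv newton 0 t]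
  exact mul_sq_sub_le_springEnergy hm hk.nonneg (x t) (v t) i j

theorem momentum_eq (hk : ∀ i j, k i j = k j i) (hv : ∀ t, HasDerivAt v (a t) t)
    (newton : ∀ t i, m i * a t i = springForce k (x t) i + F i) (t : ℝ) :
    ∑ i, m i * v t i = ∑ i, m i * v 0 i + (∑ i, F i) * t := by
  have hderiv (t : ℝ) : HasDerivAt (fun s ↦ ∑ i, m i * v s i - (∑ i, F i) * s) 0 t := by
    have hsum : HasDerivAt (fun s ↦ ∑ i, m i * v s i) (∑ i, m i * a t i) t :=
      .fun_sum fun i _ ↦ (hasDerivAt_pi.1 (hv t) i).const_mul (m i)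
    refine (hsum.fun_sub ((hasDerivAt_id t).const_mul (∑ i, F i))).congr_deriv ?_
    simp [newton, Finset.sum_add_distrib, sum_springForce hk]
  have := eq_of_forall_hasDerivAt_zero hderiv t 0
  linarith

theorem exists_dist_velocity_le {G : SimpleGraph ι} (hG : G.Preconnected)
    (hm : ∀ i, 0 < m i) (hk : IsStiffnessMatrix G k)
    (hx : ∀ t, HasDerivAt x (v t) t) (hv : ∀ t, HasDerivAt v (a t) t)
    (newton : ∀ t i, m i * a t i = springForce k (x t) i + F i) (i j : ι) :
    ∃ B, ∀ t, dist (v t i) (v t j) ≤ B := by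
  have ha (t : ℝ) : HasDerivAt a (fun i ↦ springForce k (v t) i / m i) t := by
    have : a = fun t i ↦ (springForce k (x t) i + F i) / m i := by
      ext t i
      rw [eq_div_iff (hm i).ne', ← newton, mul_comm]
    rw [this]
    exact hasDerivAt_pi.2 fun i ↦
      ((hasDerivAt_springForce (hx t) i).add_const (F i)).div_const (m i)
  exact exists_dist_le_of_force_free hG (fun i ↦ (hm i).le) hk hv ha
    (fun t i ↦ mul_div_cancel₀ _ (hm i).ne') i j

theorem exists_abs_velocity_sub_le {G : SimpleGraph ι} (hG : G.Preconnected)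
    (hm : ∀ i, 0 < m i) (hk : IsStiffnessMatrix G k)
    (hx : ∀ t, HasDerivAt x (v t) t) (hv : ∀ t, HasDerivAt v (a t) t)
    (newton : ∀ t i, m i * a t i = springForce k (x t) i + F i) (j : ι) :
    ∃ B, ∀ t, |v t j - (∑ i, F i) / (∑ i, m i) * t| ≤ B := by
  choose B hB using fun i ↦ exists_dist_velocity_le hG hm hk hx hv newton i j
  set P := ∑ i, m i * v 0 i
  have hM : 0 < ∑ i, m i := Finset.sum_pos (fun i _ ↦ hm i) ⟨j, Finset.mem_univ j⟩
  refine ⟨(∑ i, m i * B i + |P|) / ∑ i, m i, fun t ↦ ?_⟩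
  have relative : ∑ i, m i * (v t j - v t i) = (∑ i, m i) * v t j - ∑ i, m i * v t i := by
    simp only [mul_sub, Finset.sum_sub_distrib, Finset.sum_mul]
  have decomposition : v t j - (∑ i, F i) / (∑ i, m i) * t =
      (∑ i, m i * (v t j - v t i) + P) / ∑ i, m i := by
    rw [relative, momentum_eq hk.symm hv newton]
    field_simp
    ring
  have hrel : |∑ i, m i * (v t j - v t i)| ≤ ∑ i, m i * B i := by
    refine (Finset.abs_sum_le_sum_abs _ _).trans (Finset.sum_le_sum fun i _ ↦ ?_)
    rw [abs_mul, abs_of_pos (hm i), ← Real.dist_eq, dist_comm]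
    exact mul_le_mul_of_nonneg_left (hB i t) (hm i).le
  rw [decomposition, abs_div, abs_of_pos hM]
  gcongr
  exact (abs_add_le _ _).trans (by gcongr)

theorem tendsto_position_div_sq {G : SimpleGraph ι} (hG : G.Preconnected)
    (hm : ∀ i, 0 < m i) (hk : IsStiffnessMatrix G k)
    (hx : ∀ t, HasDerivAt x (v t) t) (hv : ∀ t, HasDerivAt v (a t) t)
    (newton : ∀ t i, m i * a t i = springForce k (x t) i + F i) (j : ι) :
    Tendsto (fun t ↦ x t j / t ^ 2) atTop (𝓝 ((∑ i, F i) / (∑ i, m i) / 2)) := by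
  obtain ⟨B, hB⟩ := exists_abs_velocity_sub_le hG hm hk hx hv newton j
  exact tendsto_div_sq_of_abs_hasDerivAt_sub_le (fun t ↦ hasDerivAt_pi.1 (hx t) j) hB

end Network

section Chain

/-- The stiffness matrix of a chain of `n` masses in which the `l`-th spring, `1 ≤ l < n`, has
stiffness `k l`. The masses are numbered from `1` in the paper, so mass `l` is the element `l - 1`
of `Fin n`. -/
def chainStiffness (n : ℕ) (k : ℕ → ℝ) (i j : Fin n) : ℝ :=
  (if (i : ℕ) = j + 1 then k i else 0) + if (j : ℕ) = i + 1 then k j else 0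

variable {n : ℕ} {k : ℕ → ℝ}

theorem chainStiffness_isStiffnessMatrix (hk : ∀ j, 1 ≤ j → j ≤ n - 1 → 0 < k j) :
    IsStiffnessMatrix (SimpleGraph.pathGraph n) (chainStiffness n k) where
  symm i j := add_comm _ _
  nonneg i j := by
    have hi (h : (i : ℕ) = j + 1) := hk i (by omega) (by omega)
    have hj (h : (j : ℕ) = i + 1) := hk j (by omega) (by omega)
    unfold chainStiffness
    grind
  pos_of_adj {i j} hij := by
    have hi (h : (i : ℕ) = j + 1) := hk i (by omega) (by omega)
    have hj (h : (j : ℕ) = i + 1) := hk j (by omega) (by omega)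
    rw [SimpleGraph.pathGraph_adj] at hij
    unfold chainStiffness
    grind

theorem sum_fin_succ_eq_sum_Icc {A : Type*} [AddCommMonoid A] (f : ℕ → A) :
    ∑ i : Fin n, f (i + 1) = ∑ j ∈ Finset.Icc 1 n, f j := by
  rw [Fin.sum_univ_eq_sum_range (fun i ↦ f (i + 1)), Finset.range_eq_Ico,
    Finset.sum_Ico_add' f 0 n 1]
  rfl

theorem springForce_chainStiffness (u : ℕ → ℝ) (i : Fin n) :
    springForce (chainStiffness n k) (fun j ↦ u (j + 1)) i =
      (if (i : ℕ) = 0 then 0 else k i * (u i - u (i + 1))) +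
        if (i : ℕ) + 1 < n then k (i + 1) * (u (i + 2) - u (i + 1)) else 0 := by
  obtain ⟨i, hi⟩ := i
  simp only [springForce, chainStiffness, add_mul, Finset.sum_add_distrib, ite_mul, zero_mul]
  rw [Fin.sum_univ_eq_sum_range (fun j ↦ if i = j + 1 then k i * (u (j + 1) - u (i + 1)) else 0),
    Fin.sum_univ_eq_sum_range (fun j ↦ if j = i + 1 then k j * (u (j + 1) - u (i + 1)) else 0)]
  congr 1
  · cases i with
    | zero => simp
    | succ i => simp [Nat.lt_of_succ_lt hi]
  · simp

theorem newton_chainStiffness {m z a : ℕ → ℝ} {f : ℝ} (hn : 2 ≤ n)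
    (heq1 : m 1 * a 1 = k 1 * (z 2 - z 1) - f)
    (heqj : ∀ j, 2 ≤ j → j ≤ n - 1 →
      m j * a j = k (j - 1) * (z (j - 1) - z j) + k j * (z (j + 1) - z j))
    (heqn : m n * a n = k (n - 1) * (z (n - 1) - z n)) (i : Fin n) :
    m (i + 1) * a (i + 1) = springForce (chainStiffness n k) (fun j ↦ z (j + 1)) i +
      if (i : ℕ) = 0 then -f else 0 := by
  obtain ⟨i, hi⟩ := i
  rw [springForce_chainStiffness]
  obtain rfl | hpos := Nat.eq_zero_or_pos i
  · simp [heq1, show 1 < n by omega, sub_eq_add_neg]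
  obtain hlt | rfl : i + 1 < n ∨ n = i + 1 := by omega
  · simp [heqj (i + 1) (by omega) (by omega), hpos.ne', hlt]
  · simp [heqn, hpos.ne']

end Chain

theorem bottom_mass_long_time_free_fall_general
    (n : ℕ) (hn : 2 ≤ n) (m k : ℕ → ℝ) (g : ℝ)
    (hm : ∀ j, 1 ≤ j → j ≤ n → 0 < m j)
    (hk : ∀ j, 1 ≤ j → j ≤ n - 1 → 0 < k j)
    (z : ℕ → ℝ → ℝ)
    (hz : ∀ j, 1 ≤ j → j ≤ n → ContDiff ℝ 2 (z j))
    (heq1 : ∀ t : ℝ, m 1 * deriv (deriv (z 1)) t =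
      k 1 * (z 2 t - z 1 t) - (∑ j ∈ Finset.Icc 1 n, m j) * g)
    (heqj : ∀ j, 2 ≤ j → j ≤ n - 1 → ∀ t : ℝ, m j * deriv (deriv (z j)) t =
      k (j - 1) * (z (j - 1) t - z j t) + k j * (z (j + 1) t - z j t))
    (heqn : ∀ t : ℝ, m n * deriv (deriv (z n)) t = k (n - 1) * (z (n - 1) t - z n t))
    (j : ℕ) (hj1 : 1 ≤ j) (hjn : j ≤ n) :
    Tendsto (fun t : ℝ ↦ z j t / t ^ 2) atTop (𝓝 (-g / 2)) := by
  set M := ∑ j ∈ Finset.Icc 1 n, m j with hM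
  have hMpos : 0 < M := Finset.sum_pos (fun i hi ↦ (Finset.mem_Icc.1 hi).elim (hm i))
    (Finset.nonempty_Icc.2 (by omega))
  have total_force : ∑ i : Fin n, (if (i : ℕ) = 0 then -(M * g) else 0) = -(M * g) := by
    rw [Fin.sum_univ_eq_sum_range (fun i ↦ if i = 0 then -(M * g) else 0)]
    simp [show n ≠ 0 by omega]
  have position (t : ℝ) : HasDerivAt (fun t (i : Fin n) ↦ z (i + 1) t)
      (fun i ↦ deriv (z (i + 1)) t) t :=
    hasDerivAt_pi.2 fun i ↦
      ((hz (i + 1) (by omega) (by omega)).differentiable (by simp) t).hasDerivAt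
  have velocity (t : ℝ) : HasDerivAt (fun t (i : Fin n) ↦ deriv (z (i + 1)) t)
      (fun i ↦ deriv (deriv (z (i + 1))) t) t :=
    hasDerivAt_pi.2 fun i ↦
      ((hz (i + 1) (by omega) (by omega)).differentiable_deriv_two t).hasDerivAt
  have newton (t : ℝ) :=
    newton_chainStiffness (z := (z · t)) (a := fun j ↦ deriv (deriv (z j)) t) hn
      (heq1 t) (heqj · · · t) (heqn t)
  have limit := tendsto_position_div_sq (SimpleGraph.pathGraph_preconnected n)
    (fun i ↦ hm (i + 1) (by omega) (by omega)) (chainStiffness_isStiffnessMatrix hk)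
    position velocity newton ⟨j - 1, by omega⟩
  rwa [total_force, sum_fin_succ_eq_sum_Icc m, ← hM, neg_div, mul_div_cancel_left₀ g hMpos.ne',
    Nat.sub_add_cancel hj1] at limit

/-- at long time the bottom mass falls with acceleration g: z_n(t)/t² → -g/2 as t → +∞. -/
theorem bottom_mass_long_time_free_fall
    (n : ℕ) (hn : 2 ≤ n) (m k : ℕ → ℝ) (g : ℝ)
    (hm : ∀ j, 1 ≤ j → j ≤ n → 0 < m j)
    (hk : ∀ j, 1 ≤ j → j ≤ n - 1 → 0 < k j)
    (hg : 0 < g)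
    (z : ℕ → ℝ → ℝ)
    (hsmooth : ∀ j, 1 ≤ j → j ≤ n → ContDiff ℝ (⊤ : ℕ∞) (z j))
    (heq1 : ∀ t : ℝ, m 1 * deriv (deriv (z 1)) t =
      k 1 * (z 2 t - z 1 t) - (∑ j ∈ Finset.Icc 1 n, m j) * g)
    (heqj : ∀ j, 2 ≤ j → j ≤ n - 1 → ∀ t : ℝ, m j * deriv (deriv (z j)) t =
      k (j - 1) * (z (j - 1) t - z j t) + k j * (z (j + 1) t - z j t))
    (heqn : ∀ t : ℝ, m n * deriv (deriv (z n)) t = k (n - 1) * (z (n - 1) t - z n t))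
    (hz0 : ∀ j, 1 ≤ j → j ≤ n → z j 0 = 0)
    (hz0' : ∀ j, 1 ≤ j → j ≤ n → deriv (z j) 0 = 0) :
    Filter.Tendsto (fun t : ℝ => z n t / t ^ 2) Filter.atTop (nhds (-g / 2)) :=
  bottom_mass_long_time_free_fall_general n hn m k g hm hk z
    (fun j hj1 hjn ↦ contDiff_infty.1 (hsmooth j hj1 hjn) 2) heq1 heqj heqn n (by omega) le_rfl
end

section
/- Suppose additionally that the constants come from a mass–spring system: α_j = (m_1/m_j)(k_{j−1}/k_1) for 2 ≤ j ≤ n and β_j = (m_1/m_j)(k_j/k_1) for 2 ≤ j ≤ n−1, with all m_j > 0 and k_j > 0. Then the coefficient a_2 of s² in the polynomial det A(s) equals ((∏_{j=2}^n α_j)/m_1) · Σ_{j=1}^n m_j. -/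
/-- The `n × n` tridiagonal matrix `A(s)` of the released mass–spring system with the
variable `s` regarded as a polynomial indeterminate over `ℝ`; row/column `i : Fin n`
corresponds to the 1-based index `i + 1`. -/
noncomputable def springMatrixPoly (n : ℕ) (α β : ℕ → ℝ) :
    Matrix (Fin n) (Fin n) (Polynomial ℝ) :=
  Matrix.of fun i j =>
    if (i : ℕ) = 0 then
      (if (j : ℕ) = 0 then Polynomial.X ^ 2 + 1
       else if (j : ℕ) = 1 then -1 else 0)
    else if (i : ℕ) = n - 1 then
      (if (j : ℕ) = n - 2 then Polynomial.C (-α n)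
       else if (j : ℕ) = n - 1 then Polynomial.X ^ 2 + Polynomial.C (α n) else 0)
    else
      (if (j : ℕ) = (i : ℕ) - 1 then Polynomial.C (-α ((i : ℕ) + 1))
       else if (j : ℕ) = (i : ℕ) then
         Polynomial.X ^ 2 + Polynomial.C (α ((i : ℕ) + 1) + β ((i : ℕ) + 1))
       else if (j : ℕ) = (i : ℕ) + 1 then Polynomial.C (-β ((i : ℕ) + 1))
       else 0)

/-!
Write `A(s) = s² + L`. The rows of `L` below the first sum to zero, and so does the first one
because the first mass is released; the masses `m` balance the flows along the chain, hence form a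
left null vector of `L`. Adding all rows of `A(s)`, weighted by the masses, to the first row turns
that row into `s² m`, so `m₁ a₂` is the determinant of `L` with its first row replaced by `m`.
Adding all columns of that matrix to the first one leaves `(Σ m_j) · det L'`, where `L'` is `L`
without its first row and column, and repeating the column step on `L'` gives `∏ α_j`.
-/

open Matrix Polynomial

section DetLemmas

variable {R ι : Type*} [CommRing R] [Fintype ι] [DecidableEq ι]

theorem det_eq_sum_row_zero_mul_det_submatrix_succ {n : ℕ}
    (M : Matrix (Fin (n + 1)) (Fin (n + 1)) R) (hM : ∀ i : Fin n, ∑ j, M i.succ j = 0) :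
    M.det = (∑ j, M 0 j) * (M.submatrix Fin.succ Fin.succ).det := by
  have hdet : (M.updateCol 0 fun i ↦ ∑ j, M i j).det = M.det := by
    simpa only [one_smul] using det_updateCol_sum M 0 fun _ ↦ 1
  have hminor : (M.updateCol 0 fun i ↦ ∑ j, M i j).submatrix Fin.succ Fin.succ =
      M.submatrix Fin.succ Fin.succ := by
    ext i j
    simp
  rw [← hdet, det_succ_column_zero, Fin.sum_univ_succ]
  simp [hM, hminor]

theorem mul_det_eq_mul_det_updateRow_of_vecMul_eq_smul {A : Matrix ι ι R} {v w : ι → R} {p : R}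
    (h : v ᵥ* A = p • w) (i : ι) : v i * A.det = p * (A.updateRow i w).det := by
  rw [← det_updateRow_smul, ← h, vecMul_eq_sum, det_updateRow_sum, smul_eq_mul]

theorem mul_coeff_det_scalar_X_pow_add_map_C {M : Matrix ι ι R} {w : ι → R} (hw : w ᵥ* M = 0)
    {d : ℕ} (hd : d ≠ 0) (i : ι) :
    w i * (scalar ι (X ^ d : R[X]) + M.map C).det.coeff d = (M.updateRow i w).det := by
  set A : Matrix ι ι R[X] := scalar ι (X ^ d) + M.map C with hA
  have hvec : (C ∘ w) ᵥ* A = (X ^ d : R[X]) • (C ∘ w) := by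
    have hnull : (C ∘ w) ᵥ* M.map C = 0 := by
      ext1 j
      rw [← RingHom.map_vecMul, hw, Pi.zero_apply, Pi.zero_apply, map_zero]
    rw [hA, vecMul_add, hnull, add_zero, scalar_apply, ← smul_one_eq_diagonal, vecMul_smul,
      vecMul_one]
  have heval : (A.updateRow i (C ∘ w)).map (evalRingHom 0) = M.updateRow i w := by
    rw [map_updateRow]
    congr 1
    · ext r s
      simp [hA, diagonal_apply, apply_ite, hd]
    · ext r
      simp
  calc w i * A.det.coeff d
      = (X ^ d * (A.updateRow i (C ∘ w)).det).coeff d := by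
        rw [← mul_det_eq_mul_det_updateRow_of_vecMul_eq_smul hvec, Function.comp_apply,
          coeff_C_mul]
    _ = evalRingHom 0 (A.updateRow i (C ∘ w)).det := by
        rw [coeff_X_pow_mul', if_pos le_rfl, Nat.sub_self, coeff_zero_eq_eval_zero,
          coe_evalRingHom]
    _ = (M.updateRow i w).det := by rw [RingHom.map_det, RingHom.mapMatrix_apply, heval]

theorem vecMul_eq_zero_of_isSymm_diagonal_mul {M : Matrix ι ι R} {w : ι → R}
    (hsymm : (diagonal w * M).IsSymm) (hM : M *ᵥ 1 = 0) : w ᵥ* M = 0 := by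
  calc w ᵥ* M = 1 ᵥ* (diagonal w * M) := by
        rw [← vecMul_vecMul]
        congr 1
        ext i
        simp [vecMul_diagonal]
    _ = (diagonal w * M) *ᵥ 1 := by rw [← mulVec_transpose, hsymm.eq]
    _ = 0 := by rw [← mulVec_mulVec, hM, mulVec_zero]

theorem mul_coeff_det_scalar_X_pow_add_map_C_of_mulVec_one_eq_zero {n : ℕ}
    {M : Matrix (Fin (n + 1)) (Fin (n + 1)) R} {w : Fin (n + 1) → R}
    (hM : M *ᵥ 1 = 0) (hw : w ᵥ* M = 0) {d : ℕ} (hd : d ≠ 0) :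
    w 0 * (scalar (Fin (n + 1)) (X ^ d : R[X]) + M.map C).det.coeff d =
      (∑ j, w j) * (M.submatrix Fin.succ Fin.succ).det := by
  have hsum (i : Fin n) : ∑ j, M.updateRow 0 w i.succ j = 0 := by
    simpa [mulVec, dotProduct] using congrFun hM i.succ
  rw [mul_coeff_det_scalar_X_pow_add_map_C hw hd,
    det_eq_sum_row_zero_mul_det_submatrix_succ _ hsum, updateRow_self,
    ← Fin.succAbove_zero, submatrix_updateRow_succAbove]

end DetLemmas

/-- The negated generator of a chain on `0, …, n - 1` in which site `i` is coupled to site `i - 1`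
with weight `a i` and to site `i + 1` with weight `b i`. The weights `a 0` and `b (n - 1)`, which
point out of the chain, enter only the diagonal, so that deleting end sites gives a matrix of the
same kind. -/
def chainLaplacian {R : Type*} [Ring R] (n : ℕ) (a b : ℕ → R) : Matrix (Fin n) (Fin n) R :=
  of fun i j ↦
    if (j : ℕ) = i then a i + b i
    else if (j : ℕ) + 1 = i then -a i
    else if (j : ℕ) = i + 1 then -b i
    else 0

namespace chainLaplacian

section Ring

variable {R : Type*} [Ring R] {n : ℕ} {a b : ℕ → R}

theorem submatrix_succ (n : ℕ) (a b : ℕ → R) :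
    (chainLaplacian (n + 1) a b).submatrix Fin.succ Fin.succ =
      chainLaplacian n (fun i ↦ a (i + 1)) fun i ↦ b (i + 1) := by
  ext i j
  simp [chainLaplacian]

theorem sum_row (hb : b n = 0) (i : Fin (n + 1)) :
    ∑ j, chainLaplacian (n + 1) a b i j = if i = 0 then a 0 else 0 := by
  -- For `i = 0` the index `i - 1` truncates to `0`; there the missing neighbour gets weight `0`.
  let row (j : ℕ) : R :=
    (if (i : ℕ) = j then a i + b i else 0) -
      (if (i : ℕ) - 1 = j then (if i = 0 then 0 else a i) else 0) -
      (if (i : ℕ) + 1 = j then b i else 0)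
  have hentry (j : Fin (n + 1)) : chainLaplacian (n + 1) a b i j = row j := by
    simp only [row, chainLaplacian, of_apply, Fin.ext_iff, Fin.val_zero]
    split_ifs <;> first | omega | simp
  have hi : (i : ℕ) - 1 < n + 1 := by omega
  have hlast : (if (i : ℕ) + 1 < n + 1 then b i else 0) = b i := by
    split_ifs with h
    · rfl
    · rw [show (i : ℕ) = n by omega, hb]
  calc ∑ j, chainLaplacian (n + 1) a b i j
      = ∑ j ∈ Finset.range (n + 1), row j := by
        rw [Fintype.sum_congr _ _ hentry, Fin.sum_univ_eq_sum_range row]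
    _ = a i + b i - (if i = 0 then 0 else a i) - b i := by
        simp only [row, Finset.sum_sub_distrib, Finset.sum_ite_eq, Finset.mem_range, i.isLt, hi,
          hlast, if_true]
    _ = if i = 0 then a 0 else 0 := by
        split_ifs with h
        · simp [h]
        · abel

theorem mulVec_one (ha : a 0 = 0) (hb : b n = 0) : chainLaplacian (n + 1) a b *ᵥ 1 = 0 := by
  ext i
  simp [mulVec, dotProduct, sum_row hb, ha]

end Ring

section CommRing

variable {R : Type*} [CommRing R] {n : ℕ} {a b : ℕ → R}

theorem det_eq_prod (hb : ∀ i, i + 1 = n → b i = 0) :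
    (chainLaplacian n a b).det = ∏ i ∈ Finset.range n, a i := by
  induction n generalizing a b with
  | zero => simp
  | succ n ih =>
    have hsum (i : Fin n) : ∑ j, chainLaplacian (n + 1) a b i.succ j = 0 := by
      rw [sum_row (hb n rfl), if_neg i.succ_ne_zero]
    rw [det_eq_sum_row_zero_mul_det_submatrix_succ _ hsum, sum_row (hb n rfl), if_pos rfl,
      submatrix_succ, ih fun i hi ↦ hb (i + 1) (congrArg (· + 1) hi),
      Finset.prod_range_succ', mul_comm]

theorem isSymm_diagonal_mul {w : ℕ → R} (hw : ∀ i, i + 1 < n → w (i + 1) * a (i + 1) = w i * b i) :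
    (diagonal (fun i : Fin n ↦ w i) * chainLaplacian n a b).IsSymm := by
  have hadj (i j : Fin n) (hij : (j : ℕ) = i + 1) : w j * -a j = w i * -b i := by
    rw [hij, mul_neg, mul_neg, hw i (by omega)]
  ext i j
  simp only [transpose_apply, diagonal_mul, chainLaplacian, of_apply]
  split_ifs with h₁ <;> first
    | omega
    | exact hadj i j (by omega)
    | exact (hadj j i (by omega)).symm
    | simp [h₁]

theorem mul_coeff_det_scalar_X_pow_add_map_C {w : ℕ → R} (ha : a 0 = 0) (hb : b n = 0)
    (hw : ∀ i < n, w (i + 1) * a (i + 1) = w i * b i) {d : ℕ} (hd : d ≠ 0) :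
    w 0 * (scalar (Fin (n + 1)) (X ^ d : R[X]) + (chainLaplacian (n + 1) a b).map C).det.coeff d =
      (∑ i ∈ Finset.range (n + 1), w i) * ∏ i ∈ Finset.range n, a (i + 1) := by
  have hM : chainLaplacian (n + 1) a b *ᵥ 1 = 0 := mulVec_one ha hb
  have hnull : (fun i : Fin (n + 1) ↦ w i) ᵥ* chainLaplacian (n + 1) a b = 0 :=
    vecMul_eq_zero_of_isSymm_diagonal_mul
      (isSymm_diagonal_mul fun i hi ↦ hw i (Nat.lt_of_succ_lt_succ hi)) hM
  have hminor : ((chainLaplacian (n + 1) a b).submatrix Fin.succ Fin.succ).det =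
      ∏ i ∈ Finset.range n, a (i + 1) := by
    rw [submatrix_succ, det_eq_prod]
    rintro i rfl
    exact hb
  rw [← hminor, ← Fin.sum_univ_eq_sum_range]
  exact mul_coeff_det_scalar_X_pow_add_map_C_of_mulVec_one_eq_zero hM hnull hd

end CommRing

end chainLaplacian

theorem springMatrixPoly_eq_scalar_add_map_chainLaplacian (n : ℕ) (α β : ℕ → ℝ) :
    springMatrixPoly (n + 2) α β = scalar (Fin (n + 2)) (X ^ 2 : ℝ[X]) +
      (chainLaplacian (n + 2) (fun i ↦ if i = 0 then 0 else α (i + 1))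
        fun i ↦ if i = 0 then 1 else if i = n + 1 then 0 else β (i + 1)).map C := by
  ext1 i j
  have hi := i.isLt
  have hj := j.isLt
  simp only [springMatrixPoly, chainLaplacian, scalar_apply, Matrix.add_apply, diagonal_apply,
    map_apply, of_apply, Fin.ext_iff]
  split_ifs <;> first
    | omega
    | simp; done
    | simp [show (i : ℕ) = n + 1 by omega]

theorem springMatrixPoly_det_coeff_two_general (n : ℕ) (hn : 2 ≤ n) (α β m : ℕ → ℝ)
    (hm : m 1 ≠ 0) (hα : m 2 * α 2 = m 1)
    (hβ : ∀ j, 2 ≤ j → j + 1 ≤ n → m (j + 1) * α (j + 1) = m j * β j) :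
    (springMatrixPoly n α β).det.coeff 2 =
      ((∏ j ∈ Finset.Icc 2 n, α j) / m 1) * ∑ j ∈ Finset.Icc 1 n, m j := by
  obtain ⟨N, rfl⟩ : ∃ N, n = N + 2 := ⟨n - 2, by omega⟩
  have hprod : ∏ j ∈ Finset.Icc 2 (N + 2), α j = ∏ i ∈ Finset.range (N + 1), α (i + 2) := by
    rw [Finset.range_eq_Ico, Finset.prod_Ico_add', ← Finset.Ico_add_one_right_eq_Icc]
    congr 1
  have hsum : ∑ j ∈ Finset.Icc 1 (N + 2), m j = ∑ i ∈ Finset.range (N + 2), m (i + 1) := by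
    rw [Finset.range_eq_Ico, Finset.sum_Ico_add', ← Finset.Ico_add_one_right_eq_Icc]
  rw [hprod, hsum, div_mul_eq_mul_div, eq_div_iff hm, mul_comm, mul_comm (∏ _ ∈ _, _),
    springMatrixPoly_eq_scalar_add_map_chainLaplacian]
  refine chainLaplacian.mul_coeff_det_scalar_X_pow_add_map_C (w := fun i ↦ m (i + 1))
    (if_pos rfl) (by simp) ?_ two_ne_zero
  rintro (_ | i) hi
  · simpa using hα
  · simpa [show i ≠ N by omega] using hβ (i + 2) (by omega) (by omega)

theorem massSpring_detailedBalance {K : Type*} [Field K] {n : ℕ} (hn : 2 ≤ n) {α β m k : ℕ → K}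
    (hm : ∀ j, 2 ≤ j → j ≤ n → m j ≠ 0) (hk : k 1 ≠ 0)
    (hα : ∀ j, 2 ≤ j → j ≤ n → α j = (m 1 / m j) * (k (j - 1) / k 1))
    (hβ : ∀ j, 2 ≤ j → j ≤ n - 1 → β j = (m 1 / m j) * (k j / k 1)) :
    m 2 * α 2 = m 1 ∧ ∀ j, 2 ≤ j → j + 1 ≤ n → m (j + 1) * α (j + 1) = m j * β j := by
  have hmα (j : ℕ) (h₂ : 2 ≤ j) (hj : j ≤ n) : m j * α j = m 1 * (k (j - 1) / k 1) := by
    rw [hα j h₂ hj, ← mul_assoc, mul_div_cancel₀ _ (hm j h₂ hj)]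
  have hmβ (j : ℕ) (h₂ : 2 ≤ j) (hj : j + 1 ≤ n) : m j * β j = m 1 * (k j / k 1) := by
    rw [hβ j h₂ (by omega), ← mul_assoc, mul_div_cancel₀ _ (hm j h₂ (by omega))]
  refine ⟨?_, fun j h₂ hj ↦ ?_⟩
  · rw [hmα 2 le_rfl hn, div_self hk, mul_one]
  · rw [hmα (j + 1) (by omega) hj, hmβ j h₂ hj, Nat.add_sub_cancel]

/-- when the constants come from a mass–spring system, i.e.
`α j = (m 1 / m j) * (k (j−1) / k 1)` for `2 ≤ j ≤ n` and
`β j = (m 1 / m j) * (k j / k 1)` for `2 ≤ j ≤ n − 1` with all masses and spring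
constants positive, the coefficient `a₂` of `s²` in `det A(s)` equals
`((∏_{j=2}^n α j) / m 1) * Σ_{j=1}^n m j`. -/
theorem springMatrixPoly_det_coeff_two
    (n : ℕ) (hn : 2 ≤ n) (α β : ℕ → ℝ) (m k : ℕ → ℝ)
    (hm : ∀ j, 1 ≤ j → j ≤ n → 0 < m j)
    (hk : ∀ j, 1 ≤ j → j ≤ n - 1 → 0 < k j)
    (hα : ∀ j, 2 ≤ j → j ≤ n → α j = (m 1 / m j) * (k (j - 1) / k 1))
    (hβ : ∀ j, 2 ≤ j → j ≤ n - 1 → β j = (m 1 / m j) * (k j / k 1)) :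
    (springMatrixPoly n α β).det.coeff 2 =
      ((∏ j ∈ Finset.Icc 2 n, α j) / m 1) * ∑ j ∈ Finset.Icc 1 n, m j := by
  have hbalance := massSpring_detailedBalance hn (fun j h₂ hj ↦ (hm j (by omega) hj).ne')
    (hk 1 le_rfl (by omega)).ne' hα hβ
  exact springMatrixPoly_det_coeff_two_general n hn α β m (hm 1 le_rfl (by omega)).ne'
    hbalance.1 hbalance.2
end

section
/- The next-order correction to the short-time expansion of the bottom mass: the derivative of y_n of order 2n+1 at τ = 0 vanishes, and its derivative of order 2n+2 at τ = 0 equals (∏_{j=2}^n α_j) · (1 + Σ_{j=2}^{n−1} (α_j + β_j) + α_n); equivalently, y_n(τ) = −(∏_{j=2}^n α_j) (τ^{2n}/(2n)!) (1 − a_{2n−2} τ²/((2n+1)(2n+2))) + o(τ^{2n+2}) as τ → 0, where a_{2n−2} = 1 + Σ_{j=2}^{n−1}(α_j+β_j) + α_n. -/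
/-!
Write the system as `y'' = A y + f`, where `A` is the tridiagonal force matrix and `f` the force on
the first mass. Starting from rest, the odd derivatives of `y` at `0` vanish and the derivative of
order `2 k + 2` is `A ^ k f`, so the bottom mass sees the corner entries of the powers of `A`. Below
the power `n - 1` these vanish, because an impulse advances by one mass per application of `A`; at
`n - 1` the corner entry is the product of the subdiagonal. By Cayley–Hamilton, `A ^ n` is
`tr A • A ^ (n - 1)` plus lower powers, so its corner entry is `tr A` times that product, and
`-tr A` is the coefficient `a_{2n-2}` of the correction.
-/

open Topology
open scoped ContDiff Matrix

section IteratedDeriv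

variable {𝕜 : Type*} [NontriviallyNormedField 𝕜]

theorem iteratedDeriv_continuousLinearMap_comp {E F : Type*} [NormedAddCommGroup E]
    [NormedSpace 𝕜 E] [NormedAddCommGroup F] [NormedSpace 𝕜 F] (L : E →L[𝕜] F) {y : 𝕜 → E}
    {k : ℕ} {t : 𝕜} (hy : ContDiffAt 𝕜 k y t) :
    iteratedDeriv k (fun s => L (y s)) t = L (iteratedDeriv k y t) := by
  simpa [iteratedDeriv_eq_iteratedFDeriv, Function.comp_def] using
    congrArg (fun D => D fun _ => 1) (L.iteratedFDeriv_comp_left hy le_rfl)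

theorem iteratedDeriv_pi {ι : Type*} [Fintype ι] {E : ι → Type*}
    [∀ i, NormedAddCommGroup (E i)] [∀ i, NormedSpace 𝕜 (E i)] {y : ∀ i, 𝕜 → E i} {k : ℕ} {t : 𝕜}
    (hy : ∀ i, ContDiffAt 𝕜 k (y i) t) :
    iteratedDeriv k (fun s i => y i s) t = fun i => iteratedDeriv k (y i) t :=
  funext fun i => (iteratedDeriv_continuousLinearMap_comp
    (ContinuousLinearMap.proj (R := 𝕜) (φ := E) i) (contDiffAt_pi.2 hy)).symm

theorem taylor_isLittleO_of_gap {E : Type*} [NormedAddCommGroup E] [NormedSpace ℝ E] {f : ℝ → E}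
    {x₀ : ℝ} {N : ℕ} (hf : ContDiff ℝ (N + 2 : ℕ) f)
    (hlow : ∀ k < N, iteratedDeriv k f x₀ = 0) (hgap : iteratedDeriv (N + 1) f x₀ = 0) :
    (fun x => f x - (((N.factorial : ℝ)⁻¹ * (x - x₀) ^ N) • iteratedDeriv N f x₀ +
        (((N + 2).factorial : ℝ)⁻¹ * (x - x₀) ^ (N + 2)) • iteratedDeriv (N + 2) f x₀))
      =o[𝓝 x₀] fun x => (x - x₀) ^ (N + 2) := by
  refine (taylor_isLittleO_univ hf).congr_left fun x => ?_
  have low_terms : ∑ k ∈ Finset.range N,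
      ((k.factorial : ℝ)⁻¹ * (x - x₀) ^ k) • iteratedDeriv k f x₀ = 0 :=
    Finset.sum_eq_zero fun k hk => by rw [hlow k (Finset.mem_range.1 hk), smul_zero]
  simp only [taylor_within_apply, iteratedDerivWithin_univ, Finset.sum_range_succ, low_terms, hgap,
    smul_zero, zero_add, add_zero]

end IteratedDeriv

section SecondOrderLinear

variable {𝕜 E : Type*} [NontriviallyNormedField 𝕜] [NormedAddCommGroup E] [NormedSpace 𝕜 E]
  {A : E →L[𝕜] E} {f : E} {y : 𝕜 → E}

theorem contDiff_infty_of_deriv_deriv_eq (hy : ContDiff 𝕜 2 y)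
    (hode : ∀ t, deriv (deriv y) t = A (y t) + f) : ContDiff 𝕜 ∞ y := by
  have hdy : ContDiff 𝕜 1 (deriv y) := hy.deriv'
  have contDiff_add_two (k : ℕ) : ContDiff 𝕜 ((k : ℕ∞ω) + 1 + 1) y := by
    induction k with
    | zero => simpa [one_add_one_eq_two] using hy
    | succ k ih =>
      refine contDiff_succ_iff_deriv.2 ⟨hy.differentiable (by simp), by simp,
        contDiff_succ_iff_deriv.2 ⟨hdy.differentiable (by simp), by simp, ?_⟩⟩
      rw [funext hode]
      push_cast
      exact (A.contDiff.comp (ih.of_le le_self_add)).add contDiff_const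
  exact contDiff_infty.2 fun k => (contDiff_add_two k).of_le (le_self_add.trans le_self_add)

theorem iteratedDeriv_add_two_of_deriv_deriv_eq (hy : ContDiff 𝕜 2 y)
    (hode : ∀ t, deriv (deriv y) t = A (y t) + f) (k : ℕ) (t : 𝕜) :
    iteratedDeriv (k + 2) y t = A (iteratedDeriv k y t) + if k = 0 then f else 0 := by
  have hyk : ContDiffAt 𝕜 k y t :=
    (contDiff_infty.1 (contDiff_infty_of_deriv_deriv_eq hy hode) k).contDiffAt
  rw [iteratedDeriv_succ', iteratedDeriv_succ', funext hode,
    iteratedDeriv_fun_add (f := fun s => A (y s)) (A.contDiff.contDiffAt.comp t hyk)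
      contDiffAt_const,
    iteratedDeriv_continuousLinearMap_comp A hyk, iteratedDeriv_const]

theorem iteratedDeriv_odd_of_deriv_deriv_eq (hy : ContDiff 𝕜 2 y)
    (hode : ∀ t, deriv (deriv y) t = A (y t) + f) {t₀ : 𝕜} (hv : deriv y t₀ = 0) (k : ℕ) :
    iteratedDeriv (2 * k + 1) y t₀ = 0 := by
  induction k with
  | zero => simpa using hv
  | succ k ih =>
    rw [show 2 * (k + 1) + 1 = 2 * k + 1 + 2 by ring,
      iteratedDeriv_add_two_of_deriv_deriv_eq hy hode, ih]
    simp

theorem iteratedDeriv_even_of_deriv_deriv_eq (hy : ContDiff 𝕜 2 y)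
    (hode : ∀ t, deriv (deriv y) t = A (y t) + f) {t₀ : 𝕜} (hx : y t₀ = 0) (k : ℕ) :
    iteratedDeriv (2 * k + 2) y t₀ = (A ^ k) f := by
  induction k with
  | zero => simp [iteratedDeriv_add_two_of_deriv_deriv_eq hy hode, hx]
  | succ k ih =>
    rw [iteratedDeriv_add_two_of_deriv_deriv_eq hy hode, mul_add_one, ih, pow_succ']
    simp

end SecondOrderLinear

section MatrixSystem

variable {𝕜 ι : Type*} [NontriviallyNormedField 𝕜] [CompleteSpace 𝕜] [Fintype ι]
  {M : Matrix ι ι 𝕜} {f : ι → 𝕜} {y : ι → 𝕜 → 𝕜}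

theorem deriv_deriv_pi_of_deriv_deriv_eq_mulVec (hy : ∀ i, ContDiff 𝕜 2 (y i))
    (hode : ∀ i t, deriv (deriv (y i)) t = (M *ᵥ fun j => y j t) i + f i) (t : 𝕜) :
    deriv (deriv fun s i => y i s) t =
      Module.End.toContinuousLinearMap (ι → 𝕜) M.mulVecLin (fun i => y i t) + f := by
  have hpi := iteratedDeriv_pi (k := 2) (t := t) fun i => (hy i).contDiffAt
  simp only [iteratedDeriv_succ, iteratedDeriv_zero, hode] at hpi
  exact hpi

theorem contDiff_infty_of_deriv_deriv_eq_mulVec (hy : ∀ i, ContDiff 𝕜 2 (y i))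
    (hode : ∀ i t, deriv (deriv (y i)) t = (M *ᵥ fun j => y j t) i + f i) (i : ι) :
    ContDiff 𝕜 ∞ (y i) :=
  contDiff_pi.1 (contDiff_infty_of_deriv_deriv_eq (contDiff_pi.2 hy)
    (deriv_deriv_pi_of_deriv_deriv_eq_mulVec hy hode)) i

theorem iteratedDeriv_odd_of_deriv_deriv_eq_mulVec (hy : ∀ i, ContDiff 𝕜 2 (y i))
    (hode : ∀ i t, deriv (deriv (y i)) t = (M *ᵥ fun j => y j t) i + f i) {t₀ : 𝕜}
    (hv : ∀ i, deriv (y i) t₀ = 0) (k : ℕ) (i : ι) :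
    iteratedDeriv (2 * k + 1) (y i) t₀ = 0 := by
  have hv_pi : deriv (fun s i => y i s) t₀ = 0 := by
    rw [deriv_pi fun i => ((hy i).differentiable (by simp)).differentiableAt]
    exact funext hv
  have hodd := iteratedDeriv_odd_of_deriv_deriv_eq (contDiff_pi.2 hy)
    (deriv_deriv_pi_of_deriv_deriv_eq_mulVec hy hode) hv_pi k
  rw [iteratedDeriv_pi fun i => (contDiff_infty.1
    (contDiff_infty_of_deriv_deriv_eq_mulVec hy hode i) _).contDiffAt] at hodd
  exact congrFun hodd i

theorem iteratedDeriv_even_of_deriv_deriv_eq_mulVec [DecidableEq ι]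
    (hy : ∀ i, ContDiff 𝕜 2 (y i))
    (hode : ∀ i t, deriv (deriv (y i)) t = (M *ᵥ fun j => y j t) i + f i) {t₀ : 𝕜}
    (hx : ∀ i, y i t₀ = 0) (k : ℕ) (i : ι) :
    iteratedDeriv (2 * k + 2) (y i) t₀ = (M ^ k *ᵥ f) i := by
  have heven : iteratedDeriv (2 * k + 2) (fun s i => y i s) t₀ =
      (Module.End.toContinuousLinearMap (ι → 𝕜) (Matrix.toLinAlgEquiv' M) ^ k) f :=
    iteratedDeriv_even_of_deriv_deriv_eq (contDiff_pi.2 hy)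
      (deriv_deriv_pi_of_deriv_deriv_eq_mulVec hy hode) (funext hx) k
  rw [iteratedDeriv_pi fun i => (contDiff_infty.1
    (contDiff_infty_of_deriv_deriv_eq_mulVec hy hode i) _).contDiffAt, ← map_pow, ← map_pow]
    at heven
  exact congrFun heven i

end MatrixSystem

section Hessenberg

variable {R : Type*} {m : ℕ}

/-- Matrices vanishing below the first subdiagonal; the step matrix of a chain in which an impulse
advances by at most one site per application. -/
def IsUpperHessenberg [Zero R] {n : ℕ} (A : Matrix (Fin n) (Fin n) R) : Prop :=
  ∀ ⦃i j : Fin n⦄, (j : ℕ) + 1 < i → A i j = 0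

section CommSemiring

variable [CommSemiring R] {A : Matrix (Fin (m + 1)) (Fin (m + 1)) R}

theorem IsUpperHessenberg.pow_apply_zero_eq_zero (hA : IsUpperHessenberg A) {k : ℕ}
    {i : Fin (m + 1)} (hki : k < i) : (A ^ k) i 0 = 0 := by
  induction k generalizing i with
  | zero => exact Matrix.one_apply_ne (Fin.pos_iff_ne_zero.1 hki)
  | succ k ih =>
    rw [pow_succ', Matrix.mul_apply]
    refine Finset.sum_eq_zero fun j _ => ?_
    rcases lt_or_ge k (j : ℕ) with hkj | hjk
    · rw [ih hkj, mul_zero]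
    · rw [hA (by lia), zero_mul]

theorem IsUpperHessenberg.pow_val_apply_zero (hA : IsUpperHessenberg A) (i : Fin (m + 1)) :
    (A ^ (i : ℕ)) i 0 = Fin.partialProd (fun j => A j.succ j.castSucc) i := by
  induction i using Fin.induction with
  | zero => simp
  | succ i ih =>
    rw [Fin.partialProd_succ, ← ih, Fin.val_succ, pow_succ', Matrix.mul_apply, mul_comm]
    refine Finset.sum_eq_single i.castSucc (fun j _ hj => ?_) (by simp)
    rcases lt_or_gt_of_ne (Fin.val_ne_of_ne hj) with hji | hij
    · rw [hA (by simpa using hji), zero_mul]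
    · exact mul_eq_zero_of_right _ (hA.pow_apply_zero_eq_zero hij)

theorem IsUpperHessenberg.pow_apply_last_zero (hA : IsUpperHessenberg A) :
    (A ^ m) (Fin.last m) 0 = ∏ j : Fin m, A j.succ j.castSucc := by
  simpa [Fin.partialProd, List.take_of_length_le, List.prod_ofFn]
    using hA.pow_val_apply_zero (Fin.last m)

end CommSemiring

theorem IsUpperHessenberg.pow_succ_apply_last_zero [CommRing R]
    {A : Matrix (Fin (m + 1)) (Fin (m + 1)) R} (hA : IsUpperHessenberg A) :
    (A ^ (m + 1)) (Fin.last m) 0 = A.trace * ∏ j : Fin m, A j.succ j.castSucc := by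
  nontriviality R
  have cayley_hamilton : ∑ k ∈ Finset.range (m + 2), A.charpoly.coeff k • A ^ k = 0 := by
    simpa [Polynomial.aeval_eq_sum_range, A.charpoly_natDegree_eq_dim]
      using A.aeval_self_charpoly
  have coeff_top : A.charpoly.coeff (m + 1) = 1 := by
    simpa [A.charpoly_natDegree_eq_dim] using A.charpoly_monic.coeff_natDegree
  have trace_eq : A.trace = -A.charpoly.coeff m := by
    simpa using A.trace_eq_neg_charpoly_coeff
  have low_powers : ∑ k ∈ Finset.range m, A.charpoly.coeff k * (A ^ k) (Fin.last m) 0 = 0 :=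
    Finset.sum_eq_zero fun k hk => by
      rw [hA.pow_apply_zero_eq_zero (by simpa using hk), mul_zero]
  have corner := congrFun₂ cayley_hamilton (Fin.last m) 0
  simp only [Matrix.sum_apply, Matrix.smul_apply, smul_eq_mul, Finset.sum_range_succ, low_powers,
    coeff_top, hA.pow_apply_last_zero, Matrix.zero_apply] at corner
  linear_combination corner - (∏ j : Fin m, A j.succ j.castSucc) * trace_eq

end Hessenberg

section SpringMatrix

variable {R : Type*} [CommRing R]

/-- The force matrix of a line of `n` masses, where mass `j` is coupled to mass `j - 1` at rate
`a j` and to mass `j + 1` at rate `b j`. Masses are numbered from `1`, so row `i` describes mass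
`i + 1`. -/
def springMatrix (n : ℕ) (a b : ℕ → R) : Matrix (Fin n) (Fin n) R :=
  Matrix.of fun i j =>
    if (i : ℕ) = j + 1 then a (i + 1) else if (j : ℕ) = i + 1 then b (i + 1)
    else if i = j then -(a (i + 1) + b (i + 1)) else 0

variable {n : ℕ} {a b : ℕ → R}

theorem isUpperHessenberg_springMatrix : IsUpperHessenberg (springMatrix n a b) := by
  intro i j hij
  simp only [springMatrix, Matrix.of_apply]
  rw [if_neg (by lia), if_neg (by lia), if_neg (by lia)]

theorem springMatrix_mulVec (ha : a 1 = 0) (hb : b n = 0) (u : ℕ → R) (i : Fin n) :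
    (springMatrix n a b *ᵥ fun j => u (j + 1)) i =
      a (i + 1) * (u i - u (i + 1)) + b (i + 1) * (u (i + 2) - u (i + 1)) := by
  have entry (j : ℕ) : (if (i : ℕ) = j + 1 then a (i + 1) else if j = i + 1 then b (i + 1)
      else if (i : ℕ) = j then -(a (i + 1) + b (i + 1)) else 0) * u (j + 1) =
      (if (i : ℕ) = j + 1 then a (i + 1) * u i else 0) +
      (if j = i + 1 then b (i + 1) * u (i + 2) else 0) +
      (if (i : ℕ) = j then -(a (i + 1) + b (i + 1)) * u (i + 1) else 0) := by
    grind
  have lower : ∑ j ∈ Finset.range n, (if (i : ℕ) = j + 1 then a (i + 1) * u i else 0) =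
      a (i + 1) * u i := by
    obtain ⟨_ | i, hi⟩ := i
    · simp [ha]
    · simp [Finset.sum_ite_eq, show i < n by lia]
  have upper : ∑ j ∈ Finset.range n, (if j = i + 1 then b (i + 1) * u (i + 2) else 0) =
      b (i + 1) * u (i + 2) := by
    rcases eq_or_ne ((i : ℕ) + 1) n with hi | hi
    · simp [hi, hb]
    · simp [show (i : ℕ) + 1 < n by lia]
  simp only [springMatrix, Matrix.mulVec, dotProduct, Matrix.of_apply, Fin.ext_iff]
  rw [Fin.sum_univ_eq_sum_range (fun j => (if (i : ℕ) = j + 1 then a (i + 1) else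
    if j = i + 1 then b (i + 1) else
    if (i : ℕ) = j then -(a (i + 1) + b (i + 1)) else 0) * u (j + 1))]
  simp only [entry, Finset.sum_add_distrib, lower, upper, Finset.sum_ite_eq, Finset.mem_range,
    i.isLt, if_true]
  ring

theorem prod_subdiagonal_springMatrix (m : ℕ) :
    ∏ j : Fin m, springMatrix (m + 1) a b j.succ j.castSucc = ∏ j ∈ Finset.Icc 2 (m + 1), a j := by
  simp only [springMatrix, Matrix.of_apply, Fin.val_succ, Fin.val_castSucc, if_true]
  rw [Fin.prod_univ_eq_prod_range (fun j => a (j + 1 + 1)), Finset.range_eq_Ico,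
    Finset.prod_Ico_add' a 0 m 2]
  rfl

theorem trace_springMatrix :
    (springMatrix n a b).trace = -∑ j ∈ Finset.Icc 1 n, (a j + b j) := by
  simp only [Matrix.trace, springMatrix, Matrix.diag_apply, Matrix.of_apply, left_eq_add,
    one_ne_zero, if_false, if_true, Finset.sum_neg_distrib]
  rw [Fin.sum_univ_eq_sum_range (fun j => a (j + 1) + b (j + 1)), Finset.range_eq_Ico,
    Finset.sum_Ico_add' (fun j => a j + b j) 0 n 1]
  rfl

end SpringMatrix

/-- A line of masses `1, …, n` starting from rest at the origin, mass `j` being coupled to its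
neighbours at rates `a j` and `b j`, with a constant force `c` on mass `1`. Since both ends are
free, `a 1 = b n = 0`: the end masses then obey the interior equation, whatever the fictitious `y 0`
and `y (n + 1)` are. -/
structure IsForcedChain (n : ℕ) (a b : ℕ → ℝ) (c : ℝ) (y : ℕ → ℝ → ℝ) : Prop where
  left_free : a 1 = 0
  right_free : b n = 0
  contDiff : ∀ j, 1 ≤ j → j ≤ n → ContDiff ℝ 2 (y j)
  deriv_deriv : ∀ j, 1 ≤ j → j ≤ n → ∀ t, deriv (deriv (y j)) t =
    a j * (y (j - 1) t - y j t) + b j * (y (j + 1) t - y j t) + if j = 1 then c else 0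
  apply_zero : ∀ j, 1 ≤ j → j ≤ n → y j 0 = 0
  deriv_zero : ∀ j, 1 ≤ j → j ≤ n → deriv (y j) 0 = 0

namespace IsForcedChain

variable {m : ℕ} {a b : ℕ → ℝ} {c : ℝ} {y : ℕ → ℝ → ℝ}

theorem deriv_deriv_eq_mulVec (h : IsForcedChain (m + 1) a b c y) (i : Fin (m + 1)) (t : ℝ) :
    deriv (deriv (y (i + 1))) t =
      (springMatrix (m + 1) a b *ᵥ fun j => y (j + 1) t) i +
        (Pi.single 0 c : Fin (m + 1) → ℝ) i := by
  rw [h.deriv_deriv (i + 1) (by lia) (by lia),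
    springMatrix_mulVec h.left_free h.right_free (y · t)]
  simp [Pi.single_apply]

theorem smooth (h : IsForcedChain (m + 1) a b c y) (i : Fin (m + 1)) :
    ContDiff ℝ ∞ (y (i + 1)) :=
  contDiff_infty_of_deriv_deriv_eq_mulVec (y := fun i : Fin (m + 1) => y (i + 1))
    (fun i => h.contDiff (i + 1) (by lia) (by lia)) h.deriv_deriv_eq_mulVec i

theorem iteratedDeriv_odd (h : IsForcedChain (m + 1) a b c y) (k : ℕ) (i : Fin (m + 1)) :
    iteratedDeriv (2 * k + 1) (y (i + 1)) 0 = 0 :=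
  iteratedDeriv_odd_of_deriv_deriv_eq_mulVec (y := fun i : Fin (m + 1) => y (i + 1))
    (fun i => h.contDiff (i + 1) (by lia) (by lia)) h.deriv_deriv_eq_mulVec
    (fun i => h.deriv_zero (i + 1) (by lia) (by lia)) k i

theorem iteratedDeriv_even (h : IsForcedChain (m + 1) a b c y) (k : ℕ) (i : Fin (m + 1)) :
    iteratedDeriv (2 * k + 2) (y (i + 1)) 0 = (springMatrix (m + 1) a b ^ k) i 0 * c := by
  rw [iteratedDeriv_even_of_deriv_deriv_eq_mulVec (y := fun i : Fin (m + 1) => y (i + 1))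
    (fun i => h.contDiff (i + 1) (by lia) (by lia)) h.deriv_deriv_eq_mulVec
    (fun i => h.apply_zero (i + 1) (by lia) (by lia)) k i]
  simp

theorem iteratedDeriv_last_eq_zero (h : IsForcedChain (m + 1) a b c y) {k : ℕ}
    (hk : k < 2 * (m + 1)) : iteratedDeriv k (y (m + 1)) 0 = 0 := by
  obtain ⟨l, rfl | rfl⟩ := k.even_or_odd'
  · obtain _ | l := l
    · simpa using h.apply_zero (m + 1) (by lia) le_rfl
    · have hl : l < (Fin.last m : ℕ) := by rw [Fin.val_last]; lia
      have heven := h.iteratedDeriv_even l (Fin.last m)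
      rwa [isUpperHessenberg_springMatrix.pow_apply_zero_eq_zero hl, zero_mul] at heven
  · exact h.iteratedDeriv_odd l (Fin.last m)

theorem iteratedDeriv_last_leading (h : IsForcedChain (m + 1) a b c y) :
    iteratedDeriv (2 * (m + 1)) (y (m + 1)) 0 = (∏ j ∈ Finset.Icc 2 (m + 1), a j) * c := by
  rw [← prod_subdiagonal_springMatrix (b := b),
    ← isUpperHessenberg_springMatrix.pow_apply_last_zero]
  exact h.iteratedDeriv_even m (Fin.last m)

theorem iteratedDeriv_last_next (h : IsForcedChain (m + 1) a b c y) :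
    iteratedDeriv (2 * (m + 1) + 2) (y (m + 1)) 0 =
      -(∏ j ∈ Finset.Icc 2 (m + 1), a j) * (∑ j ∈ Finset.Icc 1 (m + 1), (a j + b j)) * c := by
  have heven := h.iteratedDeriv_even (m + 1) (Fin.last m)
  rw [isUpperHessenberg_springMatrix.pow_succ_apply_last_zero, trace_springMatrix,
    prod_subdiagonal_springMatrix] at heven
  exact heven.trans (by ring)

theorem last_isLittleO (h : IsForcedChain (m + 1) a b c y) :
    (fun t => y (m + 1) t - (∏ j ∈ Finset.Icc 2 (m + 1), a j) * c *
        (t ^ (2 * (m + 1)) / (2 * (m + 1)).factorial) *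
        (1 - (∑ j ∈ Finset.Icc 1 (m + 1), (a j + b j)) * t ^ 2 /
          ((2 * ((m + 1 : ℕ) : ℝ) + 1) * (2 * ((m + 1 : ℕ) : ℝ) + 2))))
      =o[𝓝 0] fun t => t ^ (2 * (m + 1) + 2) := by
  have taylor := taylor_isLittleO_of_gap
    (contDiff_infty.1 (h.smooth (Fin.last m)) _)
    (fun k hk => h.iteratedDeriv_last_eq_zero hk) (h.iteratedDeriv_odd (m + 1) (Fin.last m))
  simp only [Fin.val_last, h.iteratedDeriv_last_leading, h.iteratedDeriv_last_next, sub_zero,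
    smul_eq_mul] at taylor
  refine taylor.congr_left fun t => ?_
  rw [Nat.factorial_succ (_ + 1), Nat.factorial_succ]
  push_cast
  field_simp
  ring

end IsForcedChain

theorem isForcedChain_of_released {n : ℕ} (hn : 2 ≤ n) {α β : ℕ → ℝ} {y : ℕ → ℝ → ℝ}
    (hy : ∀ j, 1 ≤ j → j ≤ n → ContDiff ℝ 2 (y j))
    (heq1 : ∀ t : ℝ, deriv (deriv (y 1)) t = (y 2 t - y 1 t) - 1)
    (heqj : ∀ j, 2 ≤ j → j ≤ n - 1 → ∀ t : ℝ,
      deriv (deriv (y j)) t = α j * (y (j - 1) t - y j t) + β j * (y (j + 1) t - y j t))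
    (heqn : ∀ t : ℝ, deriv (deriv (y n)) t = α n * (y (n - 1) t - y n t))
    (hy0 : ∀ j, 1 ≤ j → j ≤ n → y j 0 = 0)
    (hy0' : ∀ j, 1 ≤ j → j ≤ n → deriv (y j) 0 = 0) :
    IsForcedChain n (Function.update α 1 0) (Function.update (Function.update β 1 1) n 0) (-1)
      y where
  left_free := Function.update_self ..
  right_free := Function.update_self ..
  contDiff := hy
  deriv_deriv j hj1 hjn t := by
    obtain rfl | hj1 := hj1.eq_or_lt
    · rw [heq1]
      simp [show 1 ≠ n by lia, sub_eq_add_neg]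
    · obtain rfl | hjn := hjn.eq_or_lt
      · rw [heqn]
        simp [hj1.ne']
      · rw [heqj j hj1 (by lia)]
        simp [hj1.ne', hjn.ne]
  apply_zero := hy0
  deriv_zero := hy0'

theorem prod_Icc_two_update_one {R : Type*} [CommMonoid R] (n : ℕ) (α : ℕ → R) (x : R) :
    ∏ j ∈ Finset.Icc 2 n, Function.update α 1 x j = ∏ j ∈ Finset.Icc 2 n, α j :=
  Finset.prod_congr rfl fun j hj => Function.update_of_ne (by grind) ..

theorem sum_Icc_one_update_ends {R : Type*} [AddCommMonoidWithOne R] {n : ℕ} (hn : 2 ≤ n)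
    (α β : ℕ → R) :
    ∑ j ∈ Finset.Icc 1 n,
      (Function.update α 1 0 j + Function.update (Function.update β 1 1) n 0 j) =
      1 + (∑ j ∈ Finset.Icc 2 (n - 1), (α j + β j)) + α n := by
  obtain ⟨m, rfl⟩ : ∃ m, n = m + 1 := ⟨n - 1, by lia⟩
  have interior : ∀ j ∈ Finset.Icc 2 m, Function.update α 1 0 j +
      Function.update (Function.update β 1 1) (m + 1) 0 j = α j + β j := by
    grind
  rw [Finset.sum_Icc_succ_top (by lia), ← Finset.insert_Icc_add_one_left_eq_Icc (by lia),
    Finset.sum_insert (by simp), one_add_one_eq_two, Finset.sum_congr rfl interior]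
  simp [show m ≠ 0 by lia]

theorem bottom_mass_short_time_correction_general
    (n : ℕ) (hn : 2 ≤ n) (α β : ℕ → ℝ) (y : ℕ → ℝ → ℝ)
    (hC2 : ∀ j, 1 ≤ j → j ≤ n → ContDiff ℝ 2 (y j))
    (heq1 : ∀ t : ℝ, deriv (deriv (y 1)) t = (y 2 t - y 1 t) - 1)
    (heqj : ∀ j, 2 ≤ j → j ≤ n - 1 → ∀ t : ℝ,
      deriv (deriv (y j)) t = α j * (y (j - 1) t - y j t) + β j * (y (j + 1) t - y j t))
    (heqn : ∀ t : ℝ, deriv (deriv (y n)) t = α n * (y (n - 1) t - y n t))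
    (hy0 : ∀ j, 1 ≤ j → j ≤ n → y j 0 = 0)
    (hy0' : ∀ j, 1 ≤ j → j ≤ n → deriv (y j) 0 = 0) :
    iteratedDeriv (2 * n + 1) (y n) 0 = 0 ∧
    iteratedDeriv (2 * n + 2) (y n) 0 =
      (∏ j ∈ Finset.Icc 2 n, α j) * (1 + (∑ j ∈ Finset.Icc 2 (n - 1), (α j + β j)) + α n) ∧
    (fun τ : ℝ => y n τ -
        (-(∏ j ∈ Finset.Icc 2 n, α j) * (τ ^ (2 * n) / (Nat.factorial (2 * n))) *
          (1 - (1 + (∑ j ∈ Finset.Icc 2 (n - 1), (α j + β j)) + α n) * τ ^ 2 /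
            ((2 * (n : ℝ) + 1) * (2 * (n : ℝ) + 2)))))
      =o[nhds (0 : ℝ)] fun τ : ℝ => τ ^ (2 * n + 2) := by
  have chain := isForcedChain_of_released hn hC2 heq1 heqj heqn hy0 hy0'
  rw [← prod_Icc_two_update_one n α 0, ← sum_Icc_one_update_ends hn α β]
  obtain ⟨m, rfl⟩ : ∃ m, n = m + 1 := ⟨n - 1, by lia⟩
  refine ⟨chain.iteratedDeriv_odd (m + 1) (Fin.last m), ?_, ?_⟩
  · rw [chain.iteratedDeriv_last_next]
    ring
  · simpa only [mul_neg_one] using chain.last_isLittleO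

/-- next-order correction to the short-time expansion of the bottom mass. -/
theorem bottom_mass_short_time_correction
    (n : ℕ) (hn : 2 ≤ n) (α β : ℕ → ℝ)
    (hα : ∀ j, 2 ≤ j → j ≤ n → 0 < α j)
    (hβ : ∀ j, 2 ≤ j → j ≤ n - 1 → 0 < β j)
    (y : ℕ → ℝ → ℝ)
    (hsmooth : ∀ j, 1 ≤ j → j ≤ n → ContDiff ℝ (⊤ : ℕ∞) (y j))
    (heq1 : ∀ t : ℝ, deriv (deriv (y 1)) t = (y 2 t - y 1 t) - 1)
    (heqj : ∀ j, 2 ≤ j → j ≤ n - 1 → ∀ t : ℝ,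
      deriv (deriv (y j)) t = α j * (y (j - 1) t - y j t) + β j * (y (j + 1) t - y j t))
    (heqn : ∀ t : ℝ, deriv (deriv (y n)) t = α n * (y (n - 1) t - y n t))
    (hy0 : ∀ j, 1 ≤ j → j ≤ n → y j 0 = 0)
    (hy0' : ∀ j, 1 ≤ j → j ≤ n → deriv (y j) 0 = 0) :
    iteratedDeriv (2 * n + 1) (y n) 0 = 0 ∧
    iteratedDeriv (2 * n + 2) (y n) 0 =
      (∏ j ∈ Finset.Icc 2 n, α j) * (1 + (∑ j ∈ Finset.Icc 2 (n - 1), (α j + β j)) + α n) ∧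
    (fun τ : ℝ => y n τ -
        (-(∏ j ∈ Finset.Icc 2 n, α j) * (τ ^ (2 * n) / (Nat.factorial (2 * n))) *
          (1 - (1 + (∑ j ∈ Finset.Icc 2 (n - 1), (α j + β j)) + α n) * τ ^ 2 /
            ((2 * (n : ℝ) + 1) * (2 * (n : ℝ) + 2)))))
      =o[nhds (0 : ℝ)] fun τ : ℝ => τ ^ (2 * n + 2) :=
  bottom_mass_short_time_correction_general n hn α β y
    (fun j hj1 hjn => contDiff_infty.1 (hsmooth j hj1 hjn) 2) heq1 heqj heqn hy0 hy0'
end
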